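/- Let G be a finite simple graph, let λ be a partition of |V(G)|, and let ≤ be a partial order on the vertices of G such that any two nonadjacent vertices are comparable. Then the coefficient of the Schur function s_λ in the chromatic symmetric function X_G equals the sum of sgn(T) over all special rim hook G-tabloids T of shape λ: [s_λ]X_G = Σ_{T ∈ T_{λ,G}} sgn(T). -/

import Mathlib

open scoped Classical

/-! ### Cells and Young diagrams -/

/-- A cell of a Young diagram: `(row, column)`, both 0-indexed, rows from the top. -/
abbrev Cell : Type := ℕ × ℕ

/-- The length of row `i` (0-indexed from the top) of the Young diagram of the
partition `lam`, whose parts are arranged in weakly decreasing order. -/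
def rowLen {N : ℕ} (lam : Nat.Partition N) (i : ℕ) : ℕ :=
  ((lam.parts.sort (· ≤ ·)).reverse).getD i 0

/-- The Young diagram of a partition, as a set of cells. -/
def diag {N : ℕ} (lam : Nat.Partition N) : Set Cell :=
  {c : Cell | c.2 < rowLen lam c.1}

/-- The number of rows (the length) of a partition. -/
def numRows {N : ℕ} (lam : Nat.Partition N) : ℕ := Multiset.card lam.parts

/-! ### Chromatic symmetric functions and Schur functions, as monomial-coefficient
functions.  A formal power series of bounded degree in the commuting variables
`x_0, x_1, x_2, …` is recorded by the map sending an exponent vector `μ : ℕ → ℕ`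
(only finitely many nonzero entries ever matter) to the coefficient of the monomial
`∏ i, x_i ^ μ i`.  Colors / tableau entries are positive integers, so the variable
`x_0` is never used. -/

/-- A proper coloring of `G` by positive integers. -/
def IsProperColoring {V : Type*} (G : SimpleGraph V) (f : V → ℕ) : Prop :=
  (∀ v, 0 < f v) ∧ ∀ u v, G.Adj u v → f u ≠ f v

/-- The coefficient of the monomial `∏ i, x_i ^ μ i` in the chromatic symmetric
function `X_G = ∑_{proper colorings f} ∏_{v} x_{f v}`. -/
noncomputable def XCoeff {V : Type*} [Fintype V] (G : SimpleGraph V) (μ : ℕ → ℕ) : ℚ :=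
  Nat.card {f : V → ℕ //
    IsProperColoring G f ∧ ∀ i, Nat.card {v : V // f v = i} = μ i}

/-- A semistandard Young tableau of shape `lam`: positive entries on the diagram
(normalized to `0` off the diagram), weakly increasing along rows, strictly
increasing down columns. -/
def IsSSYT {N : ℕ} (lam : Nat.Partition N) (t : Cell → ℕ) : Prop :=
  (∀ c, c ∉ diag lam → t c = 0) ∧ (∀ c ∈ diag lam, 0 < t c) ∧
  (∀ i j : ℕ, ((i, j + 1) : Cell) ∈ diag lam → t (i, j) ≤ t (i, j + 1)) ∧
  (∀ i j : ℕ, ((i + 1, j) : Cell) ∈ diag lam → t (i, j) < t (i + 1, j))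

/-- The coefficient of the monomial `∏ i, x_i ^ μ i` in the Schur function `s_lam`,
i.e. the number of SSYT of shape `lam` and weight `μ`. -/
noncomputable def schurFn {N : ℕ} (lam : Nat.Partition N) (μ : ℕ → ℕ) : ℚ :=
  Nat.card {t : Cell → ℕ // IsSSYT lam t ∧
    ∀ i, Nat.card {c : Cell // c ∈ diag lam ∧ t c = i} = μ i}

/-- The coefficient `[s_lam] f` of the Schur function `s_lam` in the (unique, when it
exists) expansion `f = ∑_{ν ⊢ N} c_ν s_ν` of a symmetric function `f`, homogeneous of
degree `N`, given by its monomial coefficients. -/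
noncomputable def sCoeff {N : ℕ} (f : (ℕ → ℕ) → ℚ) (lam : Nat.Partition N) : ℚ :=
  if h : ∃ c : Nat.Partition N →₀ ℚ, ∀ μ, f μ = c.sum fun ν a => a * schurFn ν μ
  then h.choose lam else 0

/-! ### Graphs: generalized nets, generalized spiders, disjoint unions -/

/-- The generalized net `GN_{n,m}`: the complete graph on the body `Fin n`, with a
pendant (`Sum.inr j`) attached to the anchor `Sum.inl j` for each `j : Fin m`. -/
def genNet (n m : ℕ) : SimpleGraph (Fin n ⊕ Fin m) :=
  SimpleGraph.fromRel fun a b =>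
    match a, b with
    | Sum.inl _, Sum.inl _ => True
    | Sum.inl i, Sum.inr j => (i : ℕ) = (j : ℕ)
    | Sum.inr _, _ => False

/-- The generalized spider `GS_{n,(2,1^{m-1})}`: the complete graph on the body
`Fin n`, a pendant `Sum.inr (Sum.inl j)` attached to the body vertex `Sum.inl j` for
each `j : Fin m`, and one extra vertex `Sum.inr (Sum.inr 0)` (the special pendant)
attached to the pendant `Sum.inr (Sum.inl 0)`, so that the body vertex `0` (the
special anchor) carries an attached path on two vertices. -/
def genSpider2 (n m : ℕ) : SimpleGraph (Fin n ⊕ (Fin m ⊕ Fin 1)) :=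
  SimpleGraph.fromRel fun a b =>
    match a, b with
    | Sum.inl _, Sum.inl _ => True
    | Sum.inl i, Sum.inr (Sum.inl j) => (i : ℕ) = (j : ℕ)
    | Sum.inr (Sum.inl j), Sum.inr (Sum.inr _) => (j : ℕ) = 0
    | _, _ => False

/-- Disjoint union of two simple graphs. -/
def disjUnion {α β : Type*} (G : SimpleGraph α) (H : SimpleGraph β) :
    SimpleGraph (α ⊕ β) :=
  SimpleGraph.fromRel fun a b =>
    match a, b with
    | Sum.inl a, Sum.inl b => G.Adj a b
    | Sum.inr a, Sum.inr b => H.Adj a b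
    | _, _ => False

/-- The one-vertex graph `K_1`. -/
def K1 : SimpleGraph (Fin 1) := ⊥

/-- The path (= complete graph) on two vertices `P_2`. -/
def P2 : SimpleGraph (Fin 2) := ⊤

/-! ### Operations on partitions -/

/-- `removeOnes lam t` is the partition `lam ∖ 1^t` obtained by deleting `t` parts
equal to `1` from `lam` (junk value if `lam` has fewer than `t` parts equal to `1`). -/
def removeOnes {N : ℕ} (lam : Nat.Partition N) (t : ℕ) : Nat.Partition (N - t) :=
  if h : Multiset.replicate t 1 ≤ lam.parts then
    { parts := lam.parts - Multiset.replicate t 1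
      parts_pos := fun hx =>
        lam.parts_pos (Multiset.mem_of_le (tsub_le_self) hx)
      parts_sum := by
        have h1 : (lam.parts - Multiset.replicate t 1) + Multiset.replicate t 1
            = lam.parts := tsub_add_cancel_of_le h
        have h2 := congrArg Multiset.sum h1
        rw [Multiset.sum_add, Multiset.sum_replicate, lam.parts_sum] at h2
        simp only [smul_eq_mul, mul_one] at h2
        omega }
  else Nat.Partition.indiscrete (N - t)

/-- The partition `(2^a, 1^b)` of `2*a + b`. -/
def twoOne (a b : ℕ) : Nat.Partition (2 * a + b) where
  parts := Multiset.replicate a 2 + Multiset.replicate b 1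
  parts_pos := by
    intro i hi
    rw [Multiset.mem_add] at hi
    rcases hi with hi | hi <;> · rw [Multiset.eq_of_mem_replicate hi]; omega
  parts_sum := by
    rw [Multiset.sum_add, Multiset.sum_replicate, Multiset.sum_replicate]
    simp only [smul_eq_mul, mul_one]
    omega

/-! ### Special rim hook `G`-tabloids -/

/-- Two cells are adjacent if they share an edge. -/
def cellAdj (c d : Cell) : Prop :=
  (c.1 = d.1 ∧ (c.2 + 1 = d.2 ∨ d.2 + 1 = c.2)) ∨
  (c.2 = d.2 ∧ (c.1 + 1 = d.1 ∨ d.1 + 1 = c.1))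

/-- A set of cells is (the diagram of) a Young diagram if it is closed under
decreasing either coordinate. -/
def IsYoungDiag (D : Set Cell) : Prop :=
  ∀ i j i' j' : ℕ, ((i, j) : Cell) ∈ D → i' ≤ i → j' ≤ j → ((i', j') : Cell) ∈ D

/-- A set of cells is connected (via edge-adjacency, within the set). -/
def CellConnected (S : Set Cell) : Prop :=
  ∀ c ∈ S, ∀ d ∈ S, Relation.ReflTransGen (fun a b => a ∈ S ∧ b ∈ S ∧ cellAdj a b) c d

/-- A border strip (= rim hook, as a set of cells): nonempty, connected, and
containing no 2×2 square of cells. -/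
def IsBorderStrip (H : Set Cell) : Prop :=
  H.Nonempty ∧ CellConnected H ∧
    ∀ i j : ℕ, ¬(((i, j) : Cell) ∈ H ∧ ((i + 1, j) : Cell) ∈ H ∧
      ((i, j + 1) : Cell) ∈ H ∧ ((i + 1, j + 1) : Cell) ∈ H)

/-- `H` is a rim hook of the Young diagram `D`: a border strip contained in `D`
whose removal leaves a Young diagram. -/
def IsRimHookOf (D H : Set Cell) : Prop :=
  H ⊆ D ∧ IsBorderStrip H ∧ IsYoungDiag (D \ H)

/-- `IsRemovalSeq L D` says that the sets of cells in the list `L` may be removed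
successively from the diagram `D`, each being a rim hook of what remains, with
nothing left at the end. -/
def IsRemovalSeq : List (Set Cell) → Set Cell → Prop
  | [], D => D = ∅
  | H :: L, D => IsRimHookOf D H ∧ IsRemovalSeq L (D \ H)

/-- A special rim hook `G`-tabloid of shape `lam`, with respect to an order `r` on
the vertices of `G`: the cells of the diagram of `lam` are filled bijectively with
the vertices of `G` (vertex `v` goes in cell `pos v`), and the diagram is tiled by
rim hooks, successively removable, each meeting the first column.  The rim hooks are
recorded by the labelling `hk`, which assigns to each vertex the topmost row in which
its rim hook meets the first column.  The vertices in each rim hook form a stable set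
of `G` and, read from the rim hook's (bottom) cell in the first column — i.e. in
increasing order of the diagonal index `column − row` — they increase with respect
to `r`. -/
structure SRHGTabloid {V : Type*} (G : SimpleGraph V) (r : V → V → Prop)
    {N : ℕ} (lam : Nat.Partition N) where
  /-- the cell occupied by each vertex -/
  pos : V → Cell
  /-- the label of the rim hook containing each vertex: the topmost row in which
  that rim hook meets the first column -/
  hk : V → ℕ
  pos_inj : Function.Injective pos
  pos_range : Set.range pos = diag lam
  hk_mem : ∀ v, ((hk v, 0) : Cell) ∈ pos '' {u | hk u = hk v}
  hk_min : ∀ v i, ((i, 0) : Cell) ∈ pos '' {u | hk u = hk v} → hk v ≤ i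
  removal : ∃ L : List ℕ, L.Nodup ∧ (∀ i, i ∈ L ↔ ∃ v, hk v = i) ∧
    IsRemovalSeq (L.map fun i => pos '' {u | hk u = i}) (diag lam)
  stable : ∀ u v, hk u = hk v → u ≠ v → ¬G.Adj u v
  increasing : ∀ u v, hk u = hk v →
    ((pos u).2 : ℤ) - ((pos u).1 : ℤ) < ((pos v).2 : ℤ) - ((pos v).1 : ℤ) → r u v

/-- The sign of a special rim hook `G`-tabloid: `(-1)` to the total number of north
steps, where a rim hook spanning `k` rows contributes `k - 1` north steps. -/
noncomputable def tabSign {V : Type*} {G : SimpleGraph V} {r : V → V → Prop}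
    {N : ℕ} {lam : Nat.Partition N} (T : SRHGTabloid G r lam) : ℤ :=
  (-1) ^ ∑ i ∈ Finset.range N,
    ({a : ℕ | ∃ v, T.hk v = i ∧ (T.pos v).1 = a}.ncard - 1)

/-- The cells of the head of a tabloid of shape `lam`: the rows of length `≥ 2`. -/
def headCells {N : ℕ} (lam : Nat.Partition N) : Set Cell :=
  {c : Cell | c ∈ diag lam ∧ 2 ≤ rowLen lam c.1}

/-- The cells of the tail of a tabloid of shape `lam`: the rows of length `1`. -/
def tailCells {N : ℕ} (lam : Nat.Partition N) : Set Cell :=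
  {c : Cell | c ∈ diag lam ∧ rowLen lam c.1 = 1}

/-- Two special rim hook `G`-tabloids have the same head: the same cells of the head
are occupied by the same vertices, and the rim hook structure restricted to the head
agrees. -/
def SameHead {V : Type*} {G : SimpleGraph V} {r : V → V → Prop} {N : ℕ}
    {lam : Nat.Partition N} (T T' : SRHGTabloid G r lam) : Prop :=
  (∀ v, T.pos v ∈ headCells lam ↔ T'.pos v ∈ headCells lam) ∧
  (∀ v, T.pos v ∈ headCells lam → T.pos v = T'.pos v) ∧
  (∀ u v, T.pos u ∈ headCells lam → T.pos v ∈ headCells lam →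
    (T.hk u = T.hk v ↔ T'.hk u = T'.hk v))

/-!
The signed sum over the special rim hook tilings `τ` of `lam` of the Kostka number of shape `ν` and
weight given by the hook sizes of `τ` is `1` if `ν = lam` and `0` otherwise (Eğecioğlu–Remmel):
removing the first hook leaves a horizontal strip condition that holds exactly when the boundaries
of `ν` and `lam` cross at one of two consecutive rows, so that the alternating sum over the possible
first hooks telescopes. Hence the Schur functions are a basis, and the coefficient of `s_lam` in any
symmetric function is the signed sum over these tilings of its coefficients at their weights. For
`X_G` the latter count proper colourings whose colour classes have the sizes of the hooks. A colour
class is a chain, so it fills its hook in increasing order in exactly one way, and a tiling together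
with such a colouring is the same as a tabloid.
-/

/-! ### Kostka numbers and their symmetry -/

section YoungDiagrams

variable {κ ν : YoungDiagram}

theorem rowLen_eq_zero_iff {j : ℕ} : ν.rowLen j = 0 ↔ ν.colLen 0 ≤ j := by
  rw [← not_lt, ← YoungDiagram.mem_iff_lt_colLen, YoungDiagram.mem_iff_lt_rowLen,
    Nat.pos_iff_ne_zero, not_not]

theorem le_iff_rowLen_le : κ ≤ ν ↔ ∀ j, κ.rowLen j ≤ ν.rowLen j := by
  constructor
  · intro h j
    by_contra! hlt
    exact lt_irrefl _ (YoungDiagram.mem_iff_lt_rowLen.1 (h (YoungDiagram.mem_iff_lt_rowLen.2 hlt)))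
  · rintro h ⟨i, j⟩ hc
    exact YoungDiagram.mem_iff_lt_rowLen.2
      ((YoungDiagram.mem_iff_lt_rowLen.1 hc).trans_le (h i))

theorem eq_of_rowLen_eq (h : ∀ j, κ.rowLen j = ν.rowLen j) : κ = ν :=
  le_antisymm (le_iff_rowLen_le.2 fun j => (h j).le) (le_iff_rowLen_le.2 fun j => (h j).ge)

theorem card_eq_sum_rowLen {n : ℕ} (hn : ν.colLen 0 ≤ n) :
    ν.card = ∑ j ∈ Finset.range n, ν.rowLen j := by
  have hmaps : ∀ c ∈ ν.cells, c.1 ∈ Finset.range n := fun c hc =>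
    Finset.mem_range.2 <| lt_of_lt_of_le
      (YoungDiagram.mem_iff_lt_colLen.1 (ν.up_left_mem le_rfl (Nat.zero_le c.2) hc)) hn
  rw [YoungDiagram.card, Finset.card_eq_sum_card_fiberwise hmaps]
  exact Finset.sum_congr rfl fun j _ => (ν.rowLen_eq_card).symm

theorem colLen_le_of_le (h : κ ≤ ν) : κ.colLen 0 ≤ ν.colLen 0 :=
  rowLen_eq_zero_iff.1 <| Nat.le_zero.1 <|
    (le_iff_rowLen_le.1 h _).trans (rowLen_eq_zero_iff.2 le_rfl).le

theorem exists_le_rowLen_eq {a : ℕ → ℕ} (ha : Antitone a) (hν : ∀ j, a j ≤ ν.rowLen j) :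
    ∃ κ ≤ ν, ∀ j, κ.rowLen j = a j := by
  let κ : YoungDiagram :=
    { cells := ν.cells.filter fun c => c.2 < a c.1
      isLowerSet := by
        rintro ⟨i, j⟩ ⟨i', j'⟩ ⟨hi, hj⟩ hc
        simp only [Finset.coe_filter, Set.mem_ofPred_eq] at hc ⊢
        exact ⟨ν.up_left_mem hi hj hc.1, hj.trans_lt (hc.2.trans_le (ha hi))⟩ }
  have hκ (i j : ℕ) : j < κ.rowLen i ↔ j < a i := by
    rw [← YoungDiagram.mem_iff_lt_rowLen]
    refine Finset.mem_filter.trans ?_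
    refine and_iff_right_of_imp fun h => ?_
    exact YoungDiagram.mem_iff_lt_rowLen.2 (h.trans_le (hν i))
  have hrow (i : ℕ) : κ.rowLen i = a i := eq_of_forall_lt_iff (hκ i)
  exact ⟨κ, le_iff_rowLen_le.2 fun j => (hrow j).trans_le (hν j), hrow⟩

theorem finite_Iic_youngDiagram (ν : YoungDiagram) : (Set.Iic ν).Finite :=
  (ν.cells.powerset.finite_toSet.preimage
    (f := YoungDiagram.cells) fun _ _ _ _ h => YoungDiagram.ext h).subset
    fun _ h => Finset.mem_coe.2 (Finset.mem_powerset.2 (YoungDiagram.cells_subset_iff.2 h))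

theorem colLen_bot : (⊥ : YoungDiagram).colLen 0 = 0 :=
  Nat.eq_zero_of_not_pos fun h =>
    YoungDiagram.notMem_bot _ (YoungDiagram.mem_iff_lt_colLen.2 h)

theorem card_lt_card_of_lt (h : κ < ν) : κ.card < ν.card :=
  Finset.card_lt_card (YoungDiagram.cells_ssubset_iff.2 h)

theorem eq_of_le_of_card_le (h : κ ≤ ν) (hcard : ν.card ≤ κ.card) : κ = ν :=
  h.eq_of_not_lt fun hlt => hcard.not_gt (card_lt_card_of_lt hlt)

end YoungDiagrams

section Kostka

/-- `IsHorizontalStrip κ ν` says that `κ ⊆ ν` and that the skew diagram `ν / κ` has at most one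
cell in each column. -/
structure IsHorizontalStrip (κ ν : YoungDiagram) : Prop where
  rowLen_le : ∀ j, κ.rowLen j ≤ ν.rowLen j
  rowLen_succ_le : ∀ j, ν.rowLen (j + 1) ≤ κ.rowLen j

theorem IsHorizontalStrip.le {κ ν : YoungDiagram} (h : IsHorizontalStrip κ ν) : κ ≤ ν :=
  le_iff_rowLen_le.2 h.rowLen_le

theorem finite_horizontalStrips (ν : YoungDiagram) (k : ℕ) :
    {κ | IsHorizontalStrip κ ν ∧ κ.card + k = ν.card}.Finite :=
  (finite_Iic_youngDiagram ν).subset fun _ h => h.1.le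

/-- The diagrams obtained from `ν` by deleting a horizontal strip of `k` cells. -/
noncomputable def horizontalStrips (ν : YoungDiagram) (k : ℕ) : Finset YoungDiagram :=
  (finite_horizontalStrips ν k).toFinset

theorem mem_horizontalStrips {κ ν : YoungDiagram} {k : ℕ} :
    κ ∈ horizontalStrips ν k ↔ IsHorizontalStrip κ ν ∧ κ.card + k = ν.card :=
  Set.Finite.mem_toFinset _

theorem horizontalStrips_zero (ν : YoungDiagram) : horizontalStrips ν 0 = {ν} := by
  ext κ
  rw [mem_horizontalStrips, Finset.mem_singleton]
  constructor
  · rintro ⟨h, hcard⟩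
    exact eq_of_le_of_card_le h.le hcard.ge
  · rintro rfl
    exact ⟨⟨fun _ => le_rfl, fun j => κ.rowLen_anti _ _ j.le_succ⟩, rfl⟩

/-- The Kostka number of shape `ν` for the letters `1, …, n` with multiplicities
`μ 1, …, μ n`, computed by deleting the cells of the largest letter. -/
noncomputable def kostka : ℕ → (ℕ → ℕ) → YoungDiagram → ℕ
  | 0, _, ν => if ν = ⊥ then 1 else 0
  | n + 1, μ, ν => ∑ κ ∈ horizontalStrips ν (μ (n + 1)), kostka n μ κ

theorem kostka_zero (μ : ℕ → ℕ) (ν : YoungDiagram) :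
    kostka 0 μ ν = if ν = ⊥ then 1 else 0 := rfl

theorem kostka_succ (n : ℕ) (μ : ℕ → ℕ) (ν : YoungDiagram) :
    kostka (n + 1) μ ν = ∑ κ ∈ horizontalStrips ν (μ (n + 1)), kostka n μ κ := rfl

theorem kostka_congr {n : ℕ} {μ μ' : ℕ → ℕ} (h : ∀ i ∈ Set.Icc 1 n, μ i = μ' i)
    (ν : YoungDiagram) : kostka n μ ν = kostka n μ' ν := by
  induction n generalizing ν with
  | zero => rfl
  | succ n ih =>
    rw [kostka_succ, kostka_succ, h (n + 1) ⟨by omega, le_rfl⟩]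
    exact Finset.sum_congr rfl fun κ _ => ih (fun i hi => h i ⟨hi.1, hi.2.trans n.le_succ⟩) κ

theorem kostka_eq_of_le {m n : ℕ} (hmn : m ≤ n) {μ : ℕ → ℕ} (h : ∀ i, m < i → μ i = 0)
    (ν : YoungDiagram) : kostka n μ ν = kostka m μ ν := by
  induction n, hmn using Nat.le_induction with
  | base => rfl
  | succ n hmn ih =>
    rw [kostka_succ, h _ (by omega), horizontalStrips_zero, Finset.sum_singleton, ih]

theorem sum_eq_card_of_kostka_ne_zero {n : ℕ} {μ : ℕ → ℕ} {ν : YoungDiagram}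
    (h : kostka n μ ν ≠ 0) : ∑ i ∈ Finset.Icc 1 n, μ i = ν.card := by
  induction n generalizing ν with
  | zero =>
    have hν : ν = ⊥ := by simpa [kostka_zero] using h
    simp [hν, YoungDiagram.card]
  | succ n ih =>
    obtain ⟨κ, hκ, hne⟩ := Finset.exists_ne_zero_of_sum_ne_zero h
    rw [Finset.sum_Icc_succ_top (by omega), ih hne, (mem_horizontalStrips.1 hκ).2]

/-- The smallest possible row lengths of a diagram `κ` such that `ν / κ` and `κ / ρ` are
horizontal strips. -/
def minMiddleRow (ρ ν : YoungDiagram) (j : ℕ) : ℕ := max (ρ.rowLen j) (ν.rowLen (j + 1))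

/-- The largest possible row lengths of a diagram `κ` such that `ν / κ` and `κ / ρ` are
horizontal strips. -/
def maxMiddleRow (ρ ν : YoungDiagram) : ℕ → ℕ
  | 0 => ν.rowLen 0
  | j + 1 => min (ρ.rowLen j) (ν.rowLen (j + 1))

theorem isHorizontalStrip_and_isHorizontalStrip_iff {ρ κ ν : YoungDiagram} :
    IsHorizontalStrip ρ κ ∧ IsHorizontalStrip κ ν ↔
      ∀ j, minMiddleRow ρ ν j ≤ κ.rowLen j ∧ κ.rowLen j ≤ maxMiddleRow ρ ν j := by
  constructor
  · rintro ⟨hρ, hν⟩ j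
    refine ⟨max_le (hρ.rowLen_le j) (hν.rowLen_succ_le j), ?_⟩
    cases j with
    | zero => exact hν.rowLen_le 0
    | succ j => exact le_min (hρ.rowLen_succ_le j) (hν.rowLen_le _)
  · intro h
    refine ⟨⟨fun j => (le_max_left _ _).trans (h j).1, fun j => (h (j + 1)).2.trans
      (min_le_left _ _)⟩, ⟨fun j => ?_, fun j => (le_max_right _ _).trans (h j).1⟩⟩
    cases j with
    | zero => exact (h 0).2
    | succ j => exact (h (j + 1)).2.trans (min_le_right _ _)

theorem sum_minMiddleRow_add_maxMiddleRow {ρ ν : YoungDiagram} (hρ : ρ ≤ ν) :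
    ∑ j ∈ Finset.range (ν.colLen 0 + 1), (minMiddleRow ρ ν j + maxMiddleRow ρ ν j)
      = ρ.card + ν.card := by
  have hρlen : ρ.colLen 0 ≤ ν.colLen 0 := colLen_le_of_le hρ
  have hlast : minMiddleRow ρ ν (ν.colLen 0) = 0 := by
    simp [minMiddleRow, rowLen_eq_zero_iff, hρlen]
  rw [Finset.sum_add_distrib, Finset.sum_range_succ, hlast, add_zero,
    Finset.sum_range_succ' (maxMiddleRow _ _), ← add_assoc, ← Finset.sum_add_distrib,
    card_eq_sum_rowLen hρlen, card_eq_sum_rowLen (ν.colLen 0).le_succ, Finset.sum_range_succ',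
    ← add_assoc, ← Finset.sum_add_distrib]
  exact congrArg (· + _) (Finset.sum_congr rfl fun j _ => max_add_min _ _)

theorem exists_reflection {ρ κ ν : YoungDiagram} (hρ : IsHorizontalStrip ρ κ)
    (hν : IsHorizontalStrip κ ν) :
    ∃ κ', IsHorizontalStrip ρ κ' ∧ IsHorizontalStrip κ' ν ∧ ∀ j,
      κ.rowLen j + κ'.rowLen j = minMiddleRow ρ ν j + maxMiddleRow ρ ν j := by
  have hκ := isHorizontalStrip_and_isHorizontalStrip_iff.1 ⟨hρ, hν⟩
  have hanti : Antitone fun j => minMiddleRow ρ ν j + maxMiddleRow ρ ν j - κ.rowLen j := by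
    refine antitone_nat_of_succ_le fun j => ?_
    have h1 := (hκ j).2
    have h2 := (hκ (j + 1)).1
    have h3 : maxMiddleRow ρ ν (j + 1) ≤ minMiddleRow ρ ν j :=
      (min_le_left _ _).trans (le_max_left _ _)
    omega
  obtain ⟨κ', -, hκ'⟩ := exists_le_rowLen_eq (ν := ν) hanti fun j => by
    have h1 := (hκ j).1
    have h2 : maxMiddleRow ρ ν j ≤ ν.rowLen j := by
      cases j with
      | zero => exact le_rfl
      | succ j => exact min_le_right _ _
    omega
  have hmid : IsHorizontalStrip ρ κ' ∧ IsHorizontalStrip κ' ν :=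
    isHorizontalStrip_and_isHorizontalStrip_iff.2 fun j => by
      have := hκ j
      rw [hκ']
      omega
  refine ⟨κ', hmid.1, hmid.2, fun j => ?_⟩
  have := hκ j
  rw [hκ']
  omega

/-- The diagrams `κ` such that `ν / κ` and `κ / ρ` are horizontal strips with `q` and `p` cells. -/
noncomputable def middleDiagrams (ρ ν : YoungDiagram) (p q : ℕ) : Finset YoungDiagram :=
  {κ ∈ horizontalStrips ν q | ρ ∈ horizontalStrips κ p}

theorem mem_middleDiagrams {ρ κ ν : YoungDiagram} {p q : ℕ} :
    κ ∈ middleDiagrams ρ ν p q ↔ (IsHorizontalStrip κ ν ∧ κ.card + q = ν.card) ∧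
      IsHorizontalStrip ρ κ ∧ ρ.card + p = κ.card := by
  rw [middleDiagrams, Finset.mem_filter, mem_horizontalStrips, mem_horizontalStrips]

-- Reflecting each row of `κ` in the interval of its possible lengths (the Bender–Knuth
-- involution) exchanges the sizes of the two strips.
theorem card_middleDiagrams_le (ρ ν : YoungDiagram) (p q : ℕ) :
    (middleDiagrams ρ ν p q).card ≤ (middleDiagrams ρ ν q p).card := by
  refine Finset.card_le_card_of_forall_subsingleton
    (fun κ κ' => ∀ j, κ.rowLen j + κ'.rowLen j = minMiddleRow ρ ν j + maxMiddleRow ρ ν j)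
    (fun κ hκ => ?_) fun κ' _ κ₁ h₁ κ₂ h₂ => eq_of_rowLen_eq fun j => ?_
  · obtain ⟨⟨hν, hq⟩, hρ, hp⟩ := mem_middleDiagrams.1 hκ
    obtain ⟨κ', hρ', hν', hrow⟩ := exists_reflection hρ hν
    have hcard : κ.card + κ'.card = ρ.card + ν.card := by
      rw [← sum_minMiddleRow_add_maxMiddleRow (hρ.le.trans hν.le),
        card_eq_sum_rowLen ((colLen_le_of_le hν.le).trans (Nat.le_succ _)),
        card_eq_sum_rowLen ((colLen_le_of_le hν'.le).trans (Nat.le_succ _)),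
        ← Finset.sum_add_distrib]
      exact Finset.sum_congr rfl fun j _ => hrow j
    exact ⟨κ', mem_middleDiagrams.2 ⟨⟨hν', by omega⟩, hρ', by omega⟩, hrow⟩
  · exact add_right_cancel ((h₁.2 j).trans (h₂.2 j).symm)

theorem card_middleDiagrams_comm (ρ ν : YoungDiagram) (p q : ℕ) :
    (middleDiagrams ρ ν p q).card = (middleDiagrams ρ ν q p).card :=
  le_antisymm (card_middleDiagrams_le ρ ν p q) (card_middleDiagrams_le ρ ν q p)

theorem kostka_add_two (n : ℕ) (μ : ℕ → ℕ) (ν : YoungDiagram) :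
    kostka (n + 2) μ ν = ∑ ρ ∈ (finite_Iic_youngDiagram ν).toFinset,
      (middleDiagrams ρ ν (μ (n + 1)) (μ (n + 2))).card * kostka n μ ρ := by
  simp only [kostka_succ, ← smul_eq_mul, ← Finset.sum_const]
  refine Finset.sum_comm' fun κ ρ => ?_
  rw [middleDiagrams, Finset.mem_filter, Set.Finite.mem_toFinset, Set.mem_Iic]
  exact iff_self_and.2 fun h => (mem_horizontalStrips.1 h.2).1.le.trans
    (mem_horizontalStrips.1 h.1).1.le

theorem kostka_comp_swap {i n : ℕ} (hn : i + 2 ≤ n) (μ : ℕ → ℕ) (ν : YoungDiagram) :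
    kostka n (μ ∘ Equiv.swap (i + 1) (i + 2)) ν = kostka n μ ν := by
  induction n, hn using Nat.le_induction generalizing ν with
  | base =>
    rw [kostka_add_two, kostka_add_two]
    refine Finset.sum_congr rfl fun ρ _ => ?_
    rw [Function.comp_apply, Function.comp_apply, Equiv.swap_apply_left, Equiv.swap_apply_right,
      card_middleDiagrams_comm, kostka_congr (μ' := μ) fun j hj => ?_]
    have := hj.2
    rw [Function.comp_apply, Equiv.swap_apply_of_ne_of_ne (by omega) (by omega)]
  | succ n hn ih =>
    rw [kostka_succ, kostka_succ, Function.comp_apply,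
      Equiv.swap_apply_of_ne_of_ne (by omega) (by omega)]
    exact Finset.sum_congr rfl fun κ _ => ih κ

end Kostka

/-! ### Tableaux and Schur functions -/

section Tableaux

variable {κ ν : YoungDiagram} {n : ℕ} {μ : ℕ → ℕ}

/-- `HasWeight n μ T` says that the entries of the tableau `T` lie in `{1, …, n}` and that each
such `i` occurs `μ i` times. -/
structure HasWeight (n : ℕ) (μ : ℕ → ℕ) (T : SemistandardYoungTableau ν) : Prop where
  mem_Icc : ∀ c ∈ ν, T c.1 c.2 ∈ Set.Icc 1 n
  card_eq : ∀ i ∈ Set.Icc 1 n, {c ∈ ν.cells | T c.1 c.2 = i}.card = μ i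

/-- The restriction of a tableau to a smaller diagram. -/
noncomputable def restrictTableau (T : SemistandardYoungTableau ν) (h : κ ≤ ν) :
    SemistandardYoungTableau κ where
  entry i j := if (i, j) ∈ κ then T i j else 0
  row_weak' hj hc := by
    rw [if_pos hc, if_pos (κ.up_left_mem le_rfl hj.le hc)]
    exact T.row_weak hj (h hc)
  col_strict' hi hc := by
    rw [if_pos hc, if_pos (κ.up_left_mem hi.le le_rfl hc)]
    exact T.col_strict hi (h hc)
  zeros' hc := if_neg hc

theorem restrictTableau_apply (T : SemistandardYoungTableau ν) (h : κ ≤ ν) (i j : ℕ) :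
    restrictTableau T h i j = if (i, j) ∈ κ then T i j else 0 := rfl

/-- The extension of a tableau by a horizontal strip filled with the new largest entry `n + 1`. -/
noncomputable def extendTableau (h : IsHorizontalStrip κ ν) (T : SemistandardYoungTableau κ)
    (hT : HasWeight n μ T) : SemistandardYoungTableau ν where
  entry i j := if (i, j) ∈ κ then T i j else if (i, j) ∈ ν then n + 1 else 0
  row_weak' {i j₁ j₂} hj hc := by
    by_cases h₂ : (i, j₂) ∈ κ
    · rw [if_pos h₂, if_pos (κ.up_left_mem le_rfl hj.le h₂)]
      exact T.row_weak hj h₂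
    · rw [if_neg h₂, if_pos hc, if_pos (ν.up_left_mem le_rfl hj.le hc)]
      split_ifs with h₁
      · exact (hT.mem_Icc _ h₁).2.trans n.le_succ
      · exact le_rfl
  col_strict' {i₁ i₂ j} hi hc := by
    obtain ⟨i, rfl⟩ := Nat.exists_eq_succ_of_ne_zero (Nat.ne_zero_of_lt hi)
    have h₁ : (i₁, j) ∈ κ := κ.up_left_mem (Nat.le_of_lt_succ hi) le_rfl <|
      YoungDiagram.mem_iff_lt_rowLen.2 <|
        (YoungDiagram.mem_iff_lt_rowLen.1 hc).trans_le (h.rowLen_succ_le i)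
    rw [if_pos h₁, if_pos hc]
    split_ifs with h₂
    · exact T.col_strict hi h₂
    · exact Nat.lt_succ_of_le (hT.mem_Icc _ h₁).2
  zeros' hc := by rw [if_neg fun hκ => hc (h.le hκ), if_neg hc]

section Extend

variable (h : IsHorizontalStrip κ ν) {T : SemistandardYoungTableau κ} (hT : HasWeight n μ T)

theorem extendTableau_of_mem {c : Cell} (hc : c ∈ κ) : extendTableau h T hT c.1 c.2 = T c.1 c.2 :=
  if_pos hc

theorem extendTableau_of_notMem {c : Cell} (hc : c ∉ κ) (hν : c ∈ ν) :
    extendTableau h T hT c.1 c.2 = n + 1 :=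
  (if_neg hc).trans (if_pos hν)

theorem mem_iff_extendTableau_le (c : Cell) :
    c ∈ κ ↔ c ∈ ν ∧ extendTableau h T hT c.1 c.2 ≤ n := by
  by_cases hc : c ∈ κ
  · simp [hc, h.le hc, extendTableau_of_mem, (hT.mem_Icc c hc).2]
  · refine iff_of_false hc fun hν => ?_
    rw [extendTableau_of_notMem h hT hc hν.1] at hν
    omega

theorem hasWeight_extendTableau (hcard : κ.card + μ (n + 1) = ν.card) :
    HasWeight (n + 1) μ (extendTableau h T hT) where
  mem_Icc c hc := by
    by_cases hκ : c ∈ κ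
    · rw [extendTableau_of_mem h hT hκ]
      exact Set.Icc_subset_Icc_right n.le_succ (hT.mem_Icc c hκ)
    · rw [extendTableau_of_notMem h hT hκ hc]
      exact ⟨by omega, le_rfl⟩
  card_eq i hi := by
    obtain hin | rfl := Nat.le_succ_iff.1 hi.2
    · rw [← hT.card_eq i ⟨hi.1, hin⟩]
      congr 1
      ext c
      simp only [Finset.mem_filter, YoungDiagram.mem_cells]
      by_cases hκ : c ∈ κ
      · simp [hκ, h.le hκ, extendTableau_of_mem]
      · refine iff_of_false (fun hc => ?_) fun hc => hκ hc.1
        rw [extendTableau_of_notMem h hT hκ hc.1] at hc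
        omega
    · have hfilter : {c ∈ ν.cells | extendTableau h T hT c.1 c.2 = n + 1} = ν.cells \ κ.cells := by
        ext c
        simp only [Finset.mem_filter, Finset.mem_sdiff, YoungDiagram.mem_cells]
        refine and_congr_right fun hc => ⟨fun heq hκ => ?_,
          fun hκ => extendTableau_of_notMem h hT hκ hc⟩
        have := ((mem_iff_extendTableau_le h hT c).1 hκ).2
        omega
      rw [hfilter, Finset.card_sdiff_of_subset (YoungDiagram.cells_subset_iff.2 h.le)]
      exact (Nat.sub_eq_of_eq_add' hcard.symm)

end Extend

theorem exists_mem_horizontalStrips_of_hasWeight {T : SemistandardYoungTableau ν}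
    (hT : HasWeight (n + 1) μ T) :
    ∃ κ ∈ horizontalStrips ν (μ (n + 1)), ∀ c, c ∈ κ ↔ c ∈ ν ∧ T c.1 c.2 ≤ n := by
  let κ : YoungDiagram :=
    { cells := {c ∈ ν.cells | T c.1 c.2 ≤ n}
      isLowerSet := by
        rintro ⟨i, j⟩ ⟨i', j'⟩ ⟨hi, hj⟩ hc
        simp only [Finset.coe_filter, Set.mem_ofPred_eq, YoungDiagram.mem_cells] at hc ⊢
        exact ⟨ν.up_left_mem hi hj hc.1, (T.row_weak_of_le hj (ν.up_left_mem hi le_rfl hc.1)).trans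
          ((T.col_weak hi hc.1).trans hc.2)⟩ }
  have hκ (c : Cell) : c ∈ κ ↔ c ∈ ν ∧ T c.1 c.2 ≤ n := Finset.mem_filter
  have hle : κ ≤ ν := fun c hc => ((hκ c).1 hc).1
  refine ⟨κ, mem_horizontalStrips.2 ⟨⟨le_iff_rowLen_le.1 hle, fun j => ?_⟩, ?_⟩, hκ⟩
  · by_contra! hlt
    have hmem : (j + 1, κ.rowLen j) ∈ ν := YoungDiagram.mem_iff_lt_rowLen.2 hlt
    refine lt_irrefl (κ.rowLen j) (YoungDiagram.mem_iff_lt_rowLen.1 ((hκ _).2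
      ⟨ν.up_left_mem j.le_succ le_rfl hmem, Nat.le_of_lt_succ ?_⟩))
    exact (T.col_strict j.lt_succ_self hmem).trans_le (hT.mem_Icc _ hmem).2
  · rw [← hT.card_eq (n + 1) ⟨by omega, le_rfl⟩]
    refine Eq.trans (congrArg₂ _ rfl (congrArg _ (Finset.filter_congr fun c hc => ?_)))
      (Finset.card_filter_add_card_filter_not (s := ν.cells) fun c => T c.1 c.2 ≤ n)
    have := (hT.mem_Icc c hc).2
    omega

theorem hasWeight_restrictTableau {T : SemistandardYoungTableau ν}
    (hT : HasWeight (n + 1) μ T) (hκ : ∀ c, c ∈ κ ↔ c ∈ ν ∧ T c.1 c.2 ≤ n) (hle : κ ≤ ν) :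
    HasWeight n μ (restrictTableau T hle) where
  mem_Icc c hc := by
    rw [restrictTableau_apply, if_pos hc]
    exact ⟨(hT.mem_Icc c (hle hc)).1, ((hκ c).1 hc).2⟩
  card_eq i hi := by
    rw [← hT.card_eq i ⟨hi.1, hi.2.trans n.le_succ⟩]
    congr 1
    ext c
    rw [Finset.mem_filter, Finset.mem_filter, restrictTableau_apply]
    refine ⟨fun ⟨hc, heq⟩ => ⟨hle hc, (if_pos hc).symm.trans heq⟩, fun ⟨hc, heq⟩ => ?_⟩
    have hmem : c ∈ κ := (hκ c).2 ⟨hc, heq.trans_le hi.2⟩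
    exact ⟨hmem, (if_pos hmem).trans heq⟩

theorem extendTableau_restrictTableau {T : SemistandardYoungTableau ν}
    (hT : HasWeight (n + 1) μ T) (hκ : ∀ c, c ∈ κ ↔ c ∈ ν ∧ T c.1 c.2 ≤ n)
    (h : IsHorizontalStrip κ ν) :
    extendTableau h (restrictTableau T h.le) (hasWeight_restrictTableau hT hκ h.le) = T := by
  ext i j
  by_cases hmem : (i, j) ∈ κ
  · rw [extendTableau_of_mem (c := (i, j)) _ _ hmem, restrictTableau_apply, if_pos hmem]
  by_cases hν : (i, j) ∈ ν
  · rw [extendTableau_of_notMem (c := (i, j)) _ _ hmem hν]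
    have h1 := (hT.mem_Icc _ hν).2
    have h2 : ¬T i j ≤ n := fun hn => hmem ((hκ (i, j)).2 ⟨hν, hn⟩)
    exact le_antisymm (by omega) h1
  · rw [SemistandardYoungTableau.zeros _ hν, T.zeros hν]

theorem finite_hasWeight (n : ℕ) (μ : ℕ → ℕ) (ν : YoungDiagram) :
    Finite {T : SemistandardYoungTableau ν // HasWeight n μ T} := by
  refine Finite.of_injective (β := ν.cells → Set.Icc 1 n)
    (fun T c => ⟨T.1 c.1.1 c.1.2, T.2.mem_Icc _ c.2⟩) fun T T' h => ?_
  ext i j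
  by_cases hc : (i, j) ∈ ν
  · exact congrArg Subtype.val (congrFun h ⟨(i, j), hc⟩)
  · rw [T.1.zeros hc, T'.1.zeros hc]

theorem card_hasWeight_succ (n : ℕ) (μ : ℕ → ℕ) (ν : YoungDiagram) :
    Nat.card {T : SemistandardYoungTableau ν // HasWeight (n + 1) μ T} =
      ∑ κ ∈ horizontalStrips ν (μ (n + 1)),
        Nat.card {T : SemistandardYoungTableau κ // HasWeight n μ T} := by
  have hfin := finite_hasWeight n μ
  have hstrip (κ : horizontalStrips ν (μ (n + 1))) := mem_horizontalStrips.1 κ.2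
  rw [← Finset.sum_coe_sort, ← Nat.card_sigma]
  symm
  refine Nat.card_eq_of_bijective (fun x : Σ κ : horizontalStrips ν (μ (n + 1)),
    {T : SemistandardYoungTableau κ // HasWeight n μ T} =>
      ⟨extendTableau (hstrip x.1).1 x.2.1 x.2.2, hasWeight_extendTableau _ x.2.2 (hstrip x.1).2⟩)
    ⟨?_, fun ⟨T, hT⟩ => ?_⟩
  · rintro ⟨⟨κ, hκ⟩, T, hT⟩ ⟨⟨κ', hκ'⟩, T', hT'⟩ heq
    have heq : extendTableau (hstrip ⟨κ, hκ⟩).1 T hT = extendTableau (hstrip ⟨κ', hκ'⟩).1 T' hT' :=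
      congrArg Subtype.val heq
    obtain rfl : κ = κ' := by
      ext c
      exact (mem_iff_extendTableau_le (hstrip ⟨κ, hκ⟩).1 hT c).trans
        (heq ▸ (mem_iff_extendTableau_le (hstrip ⟨κ', hκ'⟩).1 hT' c).symm)
    obtain rfl : T = T' := by
      ext i j
      by_cases hc : (i, j) ∈ κ
      · rw [← extendTableau_of_mem (hstrip ⟨κ, hκ⟩).1 hT hc, heq]
        exact extendTableau_of_mem _ hT' hc
      · rw [T.zeros hc, T'.zeros hc]
    rfl
  · obtain ⟨κ, hκ, hmem⟩ := exists_mem_horizontalStrips_of_hasWeight hT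
    have hle := (mem_horizontalStrips.1 hκ).1
    exact ⟨⟨⟨κ, hκ⟩, restrictTableau T hle.le, hasWeight_restrictTableau hT hmem hle.le⟩,
      Subtype.ext (extendTableau_restrictTableau hT hmem hle)⟩

theorem card_hasWeight (n : ℕ) (μ : ℕ → ℕ) (ν : YoungDiagram) :
    Nat.card {T : SemistandardYoungTableau ν // HasWeight n μ T} = kostka n μ ν := by
  induction n generalizing ν with
  | succ n ih =>
    rw [card_hasWeight_succ, kostka_succ]
    exact Finset.sum_congr rfl fun κ _ => ih κ
  | zero =>
    rw [kostka_zero]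
    split_ifs with hν
    · subst hν
      have hempty (c : Cell) : c ∉ (⊥ : YoungDiagram) := YoungDiagram.notMem_bot c
      refine Nat.card_eq_one_iff_unique.2 ⟨⟨fun T T' => Subtype.ext ?_⟩,
        ⟨default, fun c hc => absurd hc (hempty c), fun i hi => absurd (hi.1.trans hi.2) (by simp)⟩⟩
      ext i j
      rw [T.1.zeros (hempty _), T'.1.zeros (hempty _)]
    · refine Nat.card_eq_zero.2 (Or.inl ⟨fun ⟨T, hT⟩ => hν (bot_unique fun c hc => ?_)⟩)
      have := hT.mem_Icc c hc
      exact absurd (this.1.trans this.2) (by simp)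

end Tableaux

section SchurFunctions

variable {N : ℕ}

/-- The Young diagram of a partition. -/
noncomputable def shape (lam : Nat.Partition N) : YoungDiagram :=
  YoungDiagram.ofRowLens (lam.parts.sort (· ≤ ·)).reverse
    (lam.parts.pairwise_sort (· ≤ ·)).sortedLE.reverse

theorem mem_shape {lam : Nat.Partition N} {c : Cell} : c ∈ shape lam ↔ c ∈ diag lam := by
  rw [shape, YoungDiagram.mem_ofRowLens]
  change _ ↔ c.2 < rowLen lam c.1
  rw [rowLen]
  constructor
  · rintro ⟨h, hc⟩
    rwa [List.getD_eq_getElem _ _ h]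
  · intro hc
    have h : c.1 < (lam.parts.sort (· ≤ ·)).reverse.length := by
      by_contra! h
      rw [List.getD_eq_default _ _ h] at hc
      exact Nat.not_lt_zero _ hc
    exact ⟨h, by rwa [List.getD_eq_getElem _ _ h] at hc⟩

theorem coe_cells_shape (lam : Nat.Partition N) : ((shape lam).cells : Set Cell) = diag lam :=
  Set.ext fun _ => mem_shape

theorem coe_rowLens_shape (lam : Nat.Partition N) :
    ((shape lam).rowLens : Multiset ℕ) = lam.parts := by
  rw [shape, YoungDiagram.rowLens_ofRowLens_eq_self fun x hx => lam.parts_pos (by simpa using hx)]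
  simp

theorem shape_injective : Function.Injective (shape (N := N)) := fun lam lam' h =>
  Nat.Partition.ext (by rw [← coe_rowLens_shape, h, coe_rowLens_shape])

theorem card_shape (lam : Nat.Partition N) : (shape lam).card = N := by
  refine (card_eq_sum_rowLen le_rfl).trans (Eq.trans ?_ lam.parts_sum)
  rw [← coe_rowLens_shape]
  rfl

theorem isSSYT_coe {lam : Nat.Partition N} {T : SemistandardYoungTableau (shape lam)}
    (hT : ∀ c ∈ shape lam, 0 < T c.1 c.2) : IsSSYT lam fun c => T c.1 c.2 :=
  ⟨fun _ hc => T.zeros (mt mem_shape.1 hc), fun c hc => hT c (mem_shape.2 hc),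
    fun _ j hc => T.row_weak j.lt_succ_self (mem_shape.2 hc),
    fun i _ hc => T.col_strict i.lt_succ_self (mem_shape.2 hc)⟩

theorem exists_tableau_of_isSSYT {lam : Nat.Partition N} {t : Cell → ℕ} (ht : IsSSYT lam t) :
    ∃ T : SemistandardYoungTableau (shape lam), (fun c => T c.1 c.2) = t := by
  obtain ⟨hzero, -, hrow, hcol⟩ := ht
  refine ⟨⟨fun i j => t (i, j), fun {i j₁ j₂} hj hc => ?_, fun {i₁ i₂ j} hi hc => ?_,
    fun hc => hzero _ (mt mem_shape.2 hc)⟩, rfl⟩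
  · induction j₂, hj using Nat.le_induction with
    | base => exact hrow _ _ (mem_shape.1 hc)
    | succ j _ ih =>
      exact (ih ((shape lam).up_left_mem le_rfl j.le_succ hc)).trans (hrow _ _ (mem_shape.1 hc))
  · induction i₂, hi using Nat.le_induction with
    | base => exact hcol _ _ (mem_shape.1 hc)
    | succ i _ ih =>
      exact (ih ((shape lam).up_left_mem i.le_succ le_rfl hc)).trans (hcol _ _ (mem_shape.1 hc))

theorem card_filter_entry_eq (lam : Nat.Partition N) (t : Cell → ℕ) (i : ℕ) :
    Nat.card {c : Cell // c ∈ diag lam ∧ t c = i} =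
      {c ∈ (shape lam).cells | t c = i}.card :=
  Nat.subtype_card _ fun c => by
    rw [Finset.mem_filter, YoungDiagram.mem_cells, mem_shape]

theorem isSSYT_coe_and_weight_iff {lam : Nat.Partition N} {n : ℕ} {μ : ℕ → ℕ} (h0 : μ 0 = 0)
    (hn : ∀ i, n < i → μ i = 0) (T : SemistandardYoungTableau (shape lam)) :
    (IsSSYT lam (fun c => T c.1 c.2) ∧
      ∀ i, Nat.card {c : Cell // c ∈ diag lam ∧ T c.1 c.2 = i} = μ i) ↔ HasWeight n μ T := by
  simp only [card_filter_entry_eq lam (fun c => T c.1 c.2)]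
  constructor
  · rintro ⟨⟨-, hpos, -⟩, hcard⟩
    refine ⟨fun c hc => ⟨hpos c (mem_shape.1 hc), ?_⟩, fun i _ => hcard i⟩
    by_contra! hlt
    have := (hcard (T c.1 c.2)).trans (hn _ hlt)
    exact Finset.notMem_empty c (Finset.card_eq_zero.1 this ▸ Finset.mem_filter.2 ⟨hc, rfl⟩)
  · intro hT
    refine ⟨isSSYT_coe fun c hc => (hT.mem_Icc c hc).1, fun i => ?_⟩
    by_cases hi : i ∈ Set.Icc 1 n
    · exact hT.card_eq i hi
    · have hμ : μ i = 0 := by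
        rcases Nat.eq_zero_or_pos i with rfl | hpos
        · exact h0
        · exact hn i (not_le.1 fun h => hi ⟨hpos, h⟩)
      rw [hμ, Finset.card_eq_zero, Finset.filter_eq_empty_iff]
      exact fun c hc heq => hi (heq ▸ hT.mem_Icc c hc)

theorem schurFn_eq_kostka (lam : Nat.Partition N) {n : ℕ} {μ : ℕ → ℕ} (h0 : μ 0 = 0)
    (hn : ∀ i, n < i → μ i = 0) : schurFn lam μ = kostka n μ (shape lam) := by
  rw [schurFn, ← card_hasWeight, Nat.cast_inj]
  have hiff := isSSYT_coe_and_weight_iff (lam := lam) h0 hn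
  symm
  refine Nat.card_eq_of_bijective (fun T => ⟨fun c => T.1 c.1 c.2, (hiff T.1).2 T.2⟩)
    ⟨fun T T' h => ?_, fun ⟨t, ht⟩ => ?_⟩
  · ext i j
    exact congrFun (congrArg Subtype.val h) (i, j)
  · obtain ⟨T, rfl⟩ := exists_tableau_of_isSSYT ht.1
    exact ⟨⟨T, (hiff T).1 ht⟩, rfl⟩

theorem schurFn_support {lam : Nat.Partition N} {μ : ℕ → ℕ} (h : schurFn lam μ ≠ 0) :
    μ 0 = 0 ∧ ∃ n, (∀ i, n < i → μ i = 0) ∧ ∑ i ∈ Finset.Icc 1 n, μ i = N := by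
  obtain ⟨⟨t, ⟨-, hpos, -⟩, hcard⟩⟩ := (Nat.card_ne_zero.1 (Nat.cast_ne_zero.1 h)).1
  simp only [card_filter_entry_eq] at hcard
  have h0 : μ 0 = 0 := by
    rw [← hcard, Finset.card_eq_zero, Finset.filter_eq_empty_iff]
    exact fun c hc => (hpos c (mem_shape.1 hc)).ne'
  have hn (i : ℕ) (hi : (shape lam).cells.sup t < i) : μ i = 0 := by
    rw [← hcard, Finset.card_eq_zero, Finset.filter_eq_empty_iff]
    exact fun c hc => ((Finset.le_sup hc).trans_lt hi).ne
  rw [schurFn_eq_kostka lam h0 hn, Nat.cast_ne_zero] at h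
  exact ⟨h0, _, hn, (sum_eq_card_of_kostka_ne_zero h).trans (card_shape lam)⟩

end SchurFunctions

/-! ### Special rim hooks -/

section SpecialHooks

variable {κ ν : YoungDiagram} {i j : ℕ} {c : Cell}

/-- The diagram left after removing from `ν` its rim hook that runs from the bottom of the first
column up to the end of row `i`. -/
noncomputable def removeHook (ν : YoungDiagram) (i : ℕ) : YoungDiagram where
  cells := {c ∈ ν.cells | c.1 < i ∨ (c.1 + 1, c.2 + 1) ∈ ν}
  isLowerSet := by
    rintro ⟨a, b⟩ ⟨a', b'⟩ ⟨ha, hb⟩ hc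
    simp only [Finset.coe_filter, Set.mem_ofPred_eq, YoungDiagram.mem_cells] at hc ⊢
    exact ⟨ν.up_left_mem ha hb hc.1, hc.2.imp ha.trans_lt
      (ν.up_left_mem (Nat.succ_le_succ ha) (Nat.succ_le_succ hb))⟩

theorem mem_removeHook : c ∈ removeHook ν i ↔ c ∈ ν ∧ (c.1 < i ∨ (c.1 + 1, c.2 + 1) ∈ ν) :=
  Finset.mem_filter

theorem removeHook_le (ν : YoungDiagram) (i : ℕ) : removeHook ν i ≤ ν := fun _ hc =>
  (mem_removeHook.1 hc).1

theorem rowLen_removeHook_of_lt (h : j < i) : (removeHook ν i).rowLen j = ν.rowLen j :=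
  eq_of_forall_lt_iff fun k => by
    rw [← YoungDiagram.mem_iff_lt_rowLen, ← YoungDiagram.mem_iff_lt_rowLen, mem_removeHook]
    exact and_iff_left (Or.inl h)

theorem rowLen_removeHook_of_le (h : i ≤ j) : (removeHook ν i).rowLen j = ν.rowLen (j + 1) - 1 :=
  eq_of_forall_lt_iff fun k => by
    rw [← YoungDiagram.mem_iff_lt_rowLen, mem_removeHook, or_iff_right h.not_gt,
      and_iff_right_of_imp (ν.up_left_mem (Nat.le_add_right j 1) k.le_succ),
      YoungDiagram.mem_iff_lt_rowLen]
    change k + 1 < ν.rowLen (j + 1) ↔ _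
    omega

/-- The rim hook of `ν` that runs from the bottom of the first column up to the end of row `i`. -/
noncomputable def specialHook (ν : YoungDiagram) (i : ℕ) : Finset Cell :=
  ν.cells \ (removeHook ν i).cells

theorem mem_specialHook : c ∈ specialHook ν i ↔ c ∈ ν ∧ c ∉ removeHook ν i :=
  Finset.mem_sdiff

theorem mem_specialHook_iff :
    c ∈ specialHook ν i ↔ c ∈ ν ∧ i ≤ c.1 ∧ (c.1 + 1, c.2 + 1) ∉ ν := by
  rw [mem_specialHook, mem_removeHook]
  have := not_lt (a := c.1) (b := i)
  tauto

theorem card_removeHook_add_card_specialHook (ν : YoungDiagram) (i : ℕ) :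
    (removeHook ν i).card + (specialHook ν i).card = ν.card := by
  rw [add_comm]
  exact Finset.card_sdiff_add_card_eq_card (YoungDiagram.cells_subset_iff.2 (removeHook_le ν i))

theorem bottom_mem_specialHook (h : i < ν.colLen 0) : (ν.colLen 0 - 1, 0) ∈ specialHook ν i := by
  refine mem_specialHook_iff.2 ⟨YoungDiagram.mem_iff_lt_colLen.2 (by omega), by simp; omega, ?_⟩
  intro hmem
  have := YoungDiagram.mem_iff_lt_colLen.1 (ν.up_left_mem le_rfl (Nat.zero_le _) hmem)
  omega

theorem colLen_removeHook_lt (h : i < ν.colLen 0) :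
    (removeHook ν i).colLen 0 < ν.colLen 0 := by
  have := (mem_specialHook.1 (bottom_mem_specialHook h)).2
  rw [YoungDiagram.mem_iff_lt_colLen] at this
  omega

theorem mem_specialHook_column_zero :
    (j, 0) ∈ specialHook ν i ↔ j ∈ Set.Ico ((removeHook ν i).colLen 0) (ν.colLen 0) := by
  rw [mem_specialHook, YoungDiagram.mem_iff_lt_colLen, YoungDiagram.mem_iff_lt_colLen, not_lt,
    and_comm, Set.mem_Ico]

theorem removeHook_injOn : Set.InjOn (removeHook ν) (Set.Iio (ν.colLen 0)) := by
  have hne {i j : ℕ} (hij : i < j) (hj : j < ν.colLen 0) : removeHook ν i ≠ removeHook ν j := by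
    intro heq
    have hrow := congrArg (fun κ : YoungDiagram => κ.rowLen i) heq
    rw [rowLen_removeHook_of_le le_rfl, rowLen_removeHook_of_lt hij] at hrow
    have hpos : ν.rowLen i ≠ 0 := by rw [Ne, rowLen_eq_zero_iff]; omega
    have := ν.rowLen_anti i (i + 1) i.le_succ
    omega
  intro i hi j hj heq
  rcases lt_trichotomy i j with h | h | h
  · exact absurd heq (hne h hj)
  · exact h
  · exact absurd heq.symm (hne h hi)

/-- The index of the diagonal of a cell. -/
def content (c : Cell) : ℤ := c.2 - c.1

theorem content_injOn_rim :
    Set.InjOn content {c : Cell | c ∈ ν ∧ (c.1 + 1, c.2 + 1) ∉ ν} := by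
  have hlt {c d : Cell} (h : content c = content d) (hlt : c.1 < d.1) (hd : d ∈ ν) :
      (c.1 + 1, c.2 + 1) ∈ ν := by
    have : c.2 < d.2 := by simp only [content] at h; omega
    exact ν.up_left_mem hlt this hd
  rintro c ⟨hc, hc'⟩ d ⟨hd, hd'⟩ h
  rcases lt_trichotomy c.1 d.1 with h1 | h1 | h1
  · exact absurd (hlt h h1 hd) hc'
  · exact Prod.ext h1 (by simp only [content] at h; omega)
  · exact absurd (hlt h.symm h1 hc) hd'

theorem content_injOn_specialHook : Set.InjOn content (specialHook ν i : Set Cell) :=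
  (content_injOn_rim (ν := ν)).mono fun _ hc =>
    And.intro (mem_specialHook_iff.1 hc).1 (mem_specialHook_iff.1 hc).2.2

theorem rows_specialHook : Prod.fst '' (specialHook ν i : Set Cell) = Set.Ico i (ν.colLen 0) := by
  ext a
  constructor
  · rintro ⟨c, hc, rfl⟩
    obtain ⟨hν, hi, -⟩ := mem_specialHook_iff.1 hc
    exact ⟨hi, YoungDiagram.mem_iff_lt_colLen.1 (ν.up_left_mem le_rfl (Nat.zero_le c.2) hν)⟩
  · rintro ⟨hi, ha⟩
    have hpos : ν.rowLen a ≠ 0 := by rw [Ne, rowLen_eq_zero_iff]; omega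
    refine ⟨(a, ν.rowLen a - 1), mem_specialHook_iff.2 ⟨?_, hi, ?_⟩, rfl⟩
    · exact YoungDiagram.mem_iff_lt_rowLen.2 (by omega)
    · have := ν.rowLen_anti a (a + 1) a.le_succ
      rw [YoungDiagram.mem_iff_lt_rowLen]
      change ¬ν.rowLen a - 1 + 1 < ν.rowLen (a + 1)
      omega

theorem exists_cellAdj_content_eq_sub_one (hc : c ∈ specialHook ν i)
    (hne : c ≠ (ν.colLen 0 - 1, 0)) :
    ∃ d ∈ specialHook ν i, cellAdj c d ∧ content d = content c - 1 := by
  obtain ⟨hν, hi, hrim⟩ := mem_specialHook_iff.1 hc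
  by_cases hdown : (c.1 + 1, c.2) ∈ ν
  · refine ⟨(c.1 + 1, c.2), mem_specialHook_iff.2 ⟨hdown, by simp; omega, fun h => hrim ?_⟩,
      Or.inr ⟨rfl, Or.inl rfl⟩, by simp [content]; ring⟩
    exact ν.up_left_mem (by simp) le_rfl h
  · have hcol : c.2 ≠ 0 := fun h0 => hne <| Prod.ext (by
      rw [h0, YoungDiagram.mem_iff_lt_colLen] at hdown
      have := YoungDiagram.mem_iff_lt_colLen.1 (h0 ▸ hν : (c.1, 0) ∈ ν)
      omega) h0
    have hsub : c.2 - 1 + 1 = c.2 := by omega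
    refine ⟨(c.1, c.2 - 1), mem_specialHook_iff.2
      ⟨ν.up_left_mem le_rfl (Nat.sub_le _ _) hν, hi, by rwa [hsub]⟩,
      Or.inl ⟨rfl, Or.inr hsub⟩, by simp only [content]; omega⟩

theorem reflTransGen_bottom (hc : c ∈ specialHook ν i) :
    Relation.ReflTransGen
      (fun a b => a ∈ (specialHook ν i : Set Cell) ∧ b ∈ (specialHook ν i : Set Cell) ∧ cellAdj a b)
      c (ν.colLen 0 - 1, 0) := by
  induction hn : (content c + ν.colLen 0).toNat using Nat.strong_induction_on generalizing c with
  | _ n ih =>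
    by_cases hne : c = (ν.colLen 0 - 1, 0)
    · rw [hne]
    obtain ⟨d, hd, hadj, hcontent⟩ := exists_cellAdj_content_eq_sub_one hc hne
    refine .head ⟨hc, hd, hadj⟩ (ih _ ?_ hd rfl)
    have hrow : c.1 ∈ Prod.fst '' (specialHook ν i : Set Cell) := ⟨c, hc, rfl⟩
    rw [rows_specialHook, Set.mem_Ico] at hrow
    simp only [content] at hn hcontent
    simp only [content]
    omega

theorem isYoungDiag_coe (ν : YoungDiagram) : IsYoungDiag (ν.cells : Set Cell) :=
  fun _ _ _ _ hc hi hj => ν.up_left_mem hi hj hc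

theorem coe_sdiff_specialHook (ν : YoungDiagram) (i : ℕ) :
    (ν.cells : Set Cell) \ (specialHook ν i : Set Cell) = ((removeHook ν i).cells : Set Cell) := by
  rw [← Finset.coe_sdiff, specialHook,
    Finset.sdiff_sdiff_eq_self (YoungDiagram.cells_subset_iff.2 (removeHook_le ν i))]

theorem isRimHookOf_specialHook (h : i < ν.colLen 0) :
    IsRimHookOf (ν.cells : Set Cell) (specialHook ν i : Set Cell) := by
  refine ⟨fun c hc => (mem_specialHook.1 hc).1,
    ⟨⟨_, bottom_mem_specialHook h⟩, fun c hc d hd => ?_, fun a b hsquare => ?_⟩, ?_⟩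
  · refine (reflTransGen_bottom hc).trans (Relation.reflTransGen_swap.1 ?_)
    refine Relation.ReflTransGen.mono (fun a b hab => ⟨hab.2.1, hab.1, ?_⟩) _ _
      (reflTransGen_bottom hd)
    have := hab.2.2
    unfold cellAdj at this ⊢
    omega
  · exact (mem_specialHook_iff.1 hsquare.1).2.2 (mem_specialHook_iff.1 hsquare.2.2.2).1
  · rw [coe_sdiff_specialHook]
    exact isYoungDiag_coe _

theorem exists_content_eq_of_reflTransGen {H : Set Cell} {c d : Cell} {k : ℤ}
    (h : Relation.ReflTransGen (fun a b => a ∈ H ∧ b ∈ H ∧ cellAdj a b) c d) (hd : d ∈ H)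
    (hck : content c ≤ k) (hkd : k ≤ content d) : ∃ e ∈ H, content e = k := by
  induction h using Relation.ReflTransGen.head_induction_on with
  | refl => exact ⟨d, hd, le_antisymm hck hkd⟩
  | @head a b hab _ ih =>
    obtain ⟨ha, -, hadj⟩ := hab
    obtain hak | hak := hck.eq_or_lt
    · exact ⟨a, ha, hak⟩
    · refine ih ?_
      unfold cellAdj at hadj
      simp only [content] at hak ⊢
      omega

section RimHook

variable {H : Set Cell} (h : IsRimHookOf (ν.cells : Set Cell) H)
include h

theorem mem_rimHook_of_le {d : Cell} (hc : c ∈ H) (hcd : c ≤ d) (hd : d ∈ ν) : d ∈ H := by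
  by_contra hdH
  exact (h.2.2 d.1 d.2 c.1 c.2 ⟨hd, hdH⟩ hcd.1 hcd.2).2 hc

theorem notMem_of_mem_rimHook (hc : c ∈ H) : (c.1 + 1, c.2 + 1) ∉ ν := fun hν =>
  h.2.1.2.2 c.1 c.2 ⟨hc,
    mem_rimHook_of_le h hc ⟨Nat.le_succ _, le_rfl⟩ (ν.up_left_mem le_rfl (Nat.le_succ _) hν),
    mem_rimHook_of_le h hc ⟨le_rfl, Nat.le_succ _⟩ (ν.up_left_mem (Nat.le_succ _) le_rfl hν),
    mem_rimHook_of_le h hc ⟨Nat.le_succ _, Nat.le_succ _⟩ hν⟩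

-- The contents of a connected set of cells form an interval, and a cell on the rim is determined
-- by its content.
theorem exists_eq_specialHook (hcol : ∃ a, (a, 0) ∈ H) :
    ∃ i < ν.colLen 0, H = specialHook ν i := by
  have hrows : ∃ a b, (a, b) ∈ H := hcol.imp fun a ha => ⟨0, ha⟩
  obtain ⟨b, hb⟩ := Nat.find_spec hrows
  set i := Nat.find hrows
  have hi : i < ν.colLen 0 :=
    YoungDiagram.mem_iff_lt_colLen.1 (ν.up_left_mem le_rfl (Nat.zero_le b) (h.1 hb))
  have hbottom : (ν.colLen 0 - 1, 0) ∈ H := by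
    obtain ⟨a, ha⟩ := hcol
    have hlt : a < ν.colLen 0 := YoungDiagram.mem_iff_lt_colLen.1 (h.1 ha)
    exact mem_rimHook_of_le h ha ⟨by simp; omega, le_rfl⟩
      (YoungDiagram.mem_iff_lt_colLen.2 (by omega))
  have htop : (i, ν.rowLen i - 1) ∈ H := by
    have hlt : b < ν.rowLen i := YoungDiagram.mem_iff_lt_rowLen.1 (h.1 hb)
    exact mem_rimHook_of_le h hb ⟨le_rfl, by simp; omega⟩
      (YoungDiagram.mem_iff_lt_rowLen.2 (by omega))
  refine ⟨i, hi, Set.Subset.antisymm (fun c hc => ?_) fun c hc => ?_⟩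
  · exact mem_specialHook_iff.2
      ⟨h.1 hc, Nat.find_min' hrows ⟨c.2, hc⟩, notMem_of_mem_rimHook h hc⟩
  · obtain ⟨hν, hic, hrim⟩ := mem_specialHook_iff.1 hc
    have hrow : c.2 < ν.rowLen c.1 := YoungDiagram.mem_iff_lt_rowLen.1 hν
    have hcol' : c.1 < ν.colLen 0 :=
      YoungDiagram.mem_iff_lt_colLen.1 (ν.up_left_mem le_rfl (Nat.zero_le c.2) hν)
    have hanti := ν.rowLen_anti i c.1 hic
    obtain ⟨e, he, hce⟩ := exists_content_eq_of_reflTransGen (k := content c)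
      (h.2.1.2.1 _ hbottom _ htop) htop (by simp only [content]; omega)
      (by simp only [content]; omega)
    rwa [← content_injOn_rim ⟨h.1 he, notMem_of_mem_rimHook h he⟩ ⟨hν, hrim⟩ hce]

end RimHook

end SpecialHooks

/-! ### Special rim hook tilings -/

section HookTilings

variable {ν lam : YoungDiagram} {i j : ℕ}

/-- A tiling of the diagram `ν` by special rim hooks: either `ν` is empty, or the special rim hook
ending in row `i` is removed and what remains is tiled. -/
inductive HookTiling : YoungDiagram → Type
  | nil {ν : YoungDiagram} (h : ν = ⊥) : HookTiling ν
  | cons {ν : YoungDiagram} (i : Fin (ν.colLen 0)) (τ : HookTiling (removeHook ν i)) : HookTiling ν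

namespace HookTiling

/-- The tilings of `ν` as the disjoint union of the empty tiling, present if `ν` is empty, and the
pairs of a first hook and a tiling of the rest. -/
def equivSum (ν : YoungDiagram) :
    HookTiling ν ≃ PLift (ν = ⊥) ⊕ Σ i : Fin (ν.colLen 0), HookTiling (removeHook ν i) where
  toFun
    | nil h => .inl ⟨h⟩
    | cons i τ => .inr ⟨i, τ⟩
  invFun
    | .inl h => nil h.down
    | .inr p => cons p.1 p.2
  left_inv := by rintro (_ | _) <;> rfl
  right_inv := by rintro (_ | _) <;> rfl

instance (ν : YoungDiagram) : Finite (HookTiling ν) := by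
  induction hn : ν.colLen 0 using Nat.strong_induction_on generalizing ν with
  | _ n ih =>
    have (i : Fin (ν.colLen 0)) : Finite (HookTiling (removeHook ν i)) :=
      ih _ (hn ▸ colLen_removeHook_lt i.2) _ rfl
    exact Finite.of_equiv _ (equivSum ν).symm

noncomputable instance (ν : YoungDiagram) : Fintype (HookTiling ν) := Fintype.ofFinite _

theorem sum_of_eq_bot {M : Type*} [AddCommMonoid M] (h : ν = ⊥) (f : HookTiling ν → M) :
    ∑ τ, f τ = f (nil h) := by
  refine Fintype.sum_eq_single _ fun τ hτ => ?_
  cases τ with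
  | nil h => exact absurd rfl hτ
  | cons i τ =>
    exact absurd i.2 (by simp [h, colLen_bot])

theorem sum_of_ne_bot {M : Type*} [AddCommMonoid M] (h : ν ≠ ⊥) (f : HookTiling ν → M) :
    ∑ τ, f τ = ∑ i : Fin (ν.colLen 0), ∑ τ, f (cons i τ) := by
  have : IsEmpty (PLift (ν = ⊥)) := ⟨fun p => h p.down⟩
  rw [← (equivSum ν).symm.sum_comp, Fintype.sum_sum_type, Fintype.sum_empty, zero_add,
    Fintype.sum_sigma]
  rfl

/-- The sign of a tiling; the hook ending in row `i` and starting in the last row takes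
`ν.colLen 0 - 1 - i` north steps. -/
noncomputable def sign : {ν : YoungDiagram} → HookTiling ν → ℤ
  | _, nil _ => 1
  | ν, cons i τ => (-1) ^ (ν.colLen 0 - 1 - i) * τ.sign

/-- The rim hooks of a tiling, indexed by the topmost row in which they meet the first column; the
indices that do not occur give the empty set. -/
noncomputable def hook : {ν : YoungDiagram} → HookTiling ν → ℕ → Finset Cell
  | _, nil _ => fun _ => ∅
  | ν, cons i τ => Function.update τ.hook ((removeHook ν i).colLen 0) (specialHook ν i)

theorem hook_cons_self (i : Fin (ν.colLen 0)) (τ : HookTiling (removeHook ν i)) :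
    (cons i τ).hook ((removeHook ν i).colLen 0) = specialHook ν i :=
  Function.update_self ..

theorem hook_cons_of_ne {i : Fin (ν.colLen 0)} (τ : HookTiling (removeHook ν i))
    (h : j ≠ (removeHook ν i).colLen 0) : (cons i τ).hook j = τ.hook j :=
  Function.update_of_ne h ..

theorem hook_of_colLen_le (τ : HookTiling ν) (h : ν.colLen 0 ≤ j) : τ.hook j = ∅ := by
  induction τ with
  | nil => rfl
  | cons i τ ih =>
    have := colLen_removeHook_lt i.2
    rw [hook_cons_of_ne τ (by omega), ih (by omega)]

/-- The sizes of the rim hooks of a tiling as multiplicities of the letters `1, 2, …`. -/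
noncomputable def weight (τ : HookTiling ν) : ℕ → ℕ
  | 0 => 0
  | j + 1 => (τ.hook j).card

theorem weight_of_colLen_lt (τ : HookTiling ν) (h : ν.colLen 0 < j) : τ.weight j = 0 := by
  obtain ⟨j, rfl⟩ := Nat.exists_eq_add_of_lt h
  exact Finset.card_eq_zero.2 (τ.hook_of_colLen_le (Nat.le_add_right _ _))

theorem kostka_weight_cons (i : Fin (lam.colLen 0)) (τ : HookTiling (removeHook lam i))
    (ν : YoungDiagram) :
    kostka (lam.colLen 0) (cons i τ).weight ν =
      ∑ κ ∈ horizontalStrips ν (specialHook lam i).card,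
        kostka ((removeHook lam i).colLen 0) τ.weight κ := by
  have hlt := colLen_removeHook_lt i.2
  have hweight (j : ℕ) (hj : j ≠ (removeHook lam i).colLen 0 + 1) :
      (cons i τ).weight j = τ.weight j := by
    cases j with
    | zero => rfl
    | succ j => exact congrArg Finset.card (hook_cons_of_ne τ (by omega))
  rw [kostka_eq_of_le hlt, kostka_succ, weight, hook_cons_self]
  · exact Finset.sum_congr rfl fun κ _ =>
      kostka_congr (fun j hj => hweight j (by have := hj.2; omega)) κ
  · intro j hj
    exact (hweight j (by omega)).trans (weight_of_colLen_lt τ (by omega))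

end HookTiling

/-- The boundary of `ν` crosses the boundary of `lam` at the top of row `i`: the rows of `ν` above
are at least as long as those of `lam` and the others are shorter, where the two diagrams differ by
a horizontal strip above row `i`, and from there on by one shifted by a cell along the diagonal.
Truncated subtraction allows for the empty rows below both diagrams. -/
structure CrossesAt (lam ν : YoungDiagram) (i : ℕ) : Prop where
  rowLen_le : ∀ j < i, lam.rowLen j ≤ ν.rowLen j
  rowLen_succ_le : ∀ j, j + 1 < i → ν.rowLen (j + 1) ≤ lam.rowLen j
  le_rowLen_sub_one : ∀ j ≥ i, ν.rowLen j ≤ lam.rowLen j - 1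
  le_rowLen_add_one : ∀ j ≥ i, lam.rowLen (j + 1) ≤ ν.rowLen j + 1

theorem isHorizontalStrip_removeHook_iff_rowLen : IsHorizontalStrip (removeHook lam i) ν ↔
    (∀ j < i, lam.rowLen j ≤ ν.rowLen j ∧ ν.rowLen (j + 1) ≤ lam.rowLen j) ∧
      ∀ j ≥ i, ν.rowLen (j + 1) ≤ lam.rowLen (j + 1) - 1 ∧ lam.rowLen (j + 1) ≤ ν.rowLen j + 1 := by
  constructor
  · rintro ⟨hle, hsucc⟩
    refine ⟨fun j hj => ?_, fun j hj => ?_⟩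
    · rw [← rowLen_removeHook_of_lt hj]
      exact ⟨hle j, hsucc j⟩
    · rw [← Nat.sub_le_iff_le_add, ← rowLen_removeHook_of_le hj]
      exact ⟨hsucc j, hle j⟩
  · rintro ⟨habove, hbelow⟩
    refine ⟨fun j => ?_, fun j => ?_⟩ <;> obtain hj | hj := lt_or_ge j i
    · exact (rowLen_removeHook_of_lt hj).trans_le (habove j hj).1
    · exact (rowLen_removeHook_of_le hj).trans_le (Nat.sub_le_iff_le_add.2 (hbelow j hj).2)
    · exact (habove j hj).2.trans_eq (rowLen_removeHook_of_lt hj).symm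
    · exact (hbelow j hj).1.trans_eq (rowLen_removeHook_of_le hj).symm

theorem isHorizontalStrip_removeHook_iff :
    IsHorizontalStrip (removeHook lam i) ν ↔ CrossesAt lam ν i ∨ CrossesAt lam ν (i + 1) := by
  rw [isHorizontalStrip_removeHook_iff_rowLen]
  constructor
  · rintro ⟨habove, hbelow⟩
    have hbelow' (j : ℕ) (hj : i < j) : ν.rowLen j ≤ lam.rowLen j - 1 := by
      obtain ⟨j, rfl⟩ := Nat.exists_eq_add_of_lt hj
      exact (hbelow (i + j) (Nat.le_add_right i j)).1
    obtain hi | hi := le_or_gt (lam.rowLen i) (ν.rowLen i)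
    · refine .inr ⟨fun j hj => ?_, fun j hj => (habove j (by omega)).2, hbelow',
        fun j hj => (hbelow j (by omega)).2⟩
      obtain hj | rfl := (Nat.lt_succ_iff_lt_or_eq.1 hj)
      exacts [(habove j hj).1, hi]
    · refine .inl ⟨fun j hj => (habove j hj).1, fun j hj => (habove j (by omega)).2,
        fun j hj => ?_, fun j hj => (hbelow j hj).2⟩
      obtain rfl | hj := hj.eq_or_lt
      exacts [Nat.le_sub_one_of_lt hi, hbelow' j hj]
  · rintro (h | h)
    · refine ⟨fun j hj => ⟨h.rowLen_le j hj, ?_⟩, fun j hj =>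
        ⟨h.le_rowLen_sub_one (j + 1) (by omega), h.le_rowLen_add_one j hj⟩⟩
      obtain hj | rfl := (Nat.succ_le_of_lt hj).lt_or_eq
      · exact h.rowLen_succ_le j hj
      · exact (h.le_rowLen_sub_one _ le_rfl).trans
          ((Nat.sub_le _ _).trans (lam.rowLen_anti j _ j.le_succ))
    · refine ⟨fun j hj => ⟨h.rowLen_le j (by omega), h.rowLen_succ_le j (by omega)⟩, fun j hj =>
        ⟨h.le_rowLen_sub_one (j + 1) (by omega), ?_⟩⟩
      obtain rfl | hj := hj.eq_or_lt
      · exact (lam.rowLen_anti _ _ i.le_succ).trans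
          ((h.rowLen_le _ i.lt_succ_self).trans (Nat.le_succ _))
      · exact h.le_rowLen_add_one j hj

theorem not_crossesAt_and (h : i < lam.colLen 0) :
    ¬(CrossesAt lam ν i ∧ CrossesAt lam ν (i + 1)) := by
  rintro ⟨hi, hi'⟩
  have hpos : lam.rowLen i ≠ 0 := by rw [Ne, rowLen_eq_zero_iff]; omega
  have := hi.le_rowLen_sub_one i le_rfl
  have := hi'.rowLen_le i i.lt_succ_self
  omega

theorem not_crossesAt_zero (hcard : lam.card ≤ ν.card) (hne : lam ≠ ⊥) : ¬CrossesAt lam ν 0 := by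
  intro h
  have hlt (j : ℕ) : ν.rowLen j ≤ lam.rowLen j - 1 := h.le_rowLen_sub_one j j.zero_le
  obtain rfl : ν = lam := eq_of_le_of_card_le
    (le_iff_rowLen_le.2 fun j => (hlt j).trans (Nat.sub_le _ _)) hcard
  refine hne (YoungDiagram.ext (Finset.eq_empty_of_forall_notMem fun c hc => ?_))
  have hpos : c.2 < ν.rowLen c.1 := YoungDiagram.mem_iff_lt_rowLen.1 hc
  have := hlt c.1
  omega

theorem crossesAt_colLen_iff (hcard : ν.card ≤ lam.card) :
    CrossesAt lam ν (lam.colLen 0) ↔ ν = lam := by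
  constructor
  · intro h
    refine (eq_of_le_of_card_le (le_iff_rowLen_le.2 fun j => ?_) hcard).symm
    obtain hj | hj := lt_or_ge j (lam.colLen 0)
    · exact h.rowLen_le j hj
    · exact (rowLen_eq_zero_iff.2 hj).trans_le (Nat.zero_le _)
  · rintro rfl
    have hanti (j : ℕ) := ν.rowLen_anti j (j + 1) j.le_succ
    refine ⟨fun j _ => le_rfl, fun j _ => hanti j, fun j hj => ?_, fun j _ => ?_⟩
    · exact (rowLen_eq_zero_iff.2 hj).trans_le (Nat.zero_le _)
    · exact (hanti j).trans (Nat.le_succ _)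

-- The hooks whose removal leaves a horizontal strip come in consecutive pairs, so that their signs
-- telescope.
theorem sum_neg_one_pow_isHorizontalStrip_removeHook (hcard : lam.card = ν.card) (hne : lam ≠ ⊥) :
    ∑ i ∈ Finset.range (lam.colLen 0),
        (-1 : ℤ) ^ (lam.colLen 0 - 1 - i) *
          (if IsHorizontalStrip (removeHook lam i) ν then 1 else 0) =
      if ν = lam then 1 else 0 := by
  let s (i : ℕ) : ℤ := (-1) ^ (lam.colLen 0 - i) * if CrossesAt lam ν i then 1 else 0
  have hs : ∀ i ∈ Finset.range (lam.colLen 0), (-1 : ℤ) ^ (lam.colLen 0 - 1 - i) *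
      (if IsHorizontalStrip (removeHook lam i) ν then 1 else 0) = s (i + 1) - s i := by
    intro i hi
    rw [Finset.mem_range] at hi
    have hpow : (-1 : ℤ) ^ (lam.colLen 0 - i) = -(-1) ^ (lam.colLen 0 - (i + 1)) := by
      rw [show lam.colLen 0 - i = lam.colLen 0 - (i + 1) + 1 by omega, pow_succ]
      ring
    have := not_crossesAt_and (ν := ν) hi
    simp only [s, hpow, Nat.sub_sub, add_comm 1 i, isHorizontalStrip_removeHook_iff]
    by_cases h : CrossesAt lam ν i <;> by_cases h' : CrossesAt lam ν (i + 1) <;> simp_all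
  rw [Finset.sum_congr rfl hs, Finset.sum_range_sub]
  simp [s, not_crossesAt_zero hcard.le hne, crossesAt_colLen_iff hcard.ge]

theorem sum_sign_mul_kostka_weight (hcard : lam.card = ν.card) :
    ∑ τ : HookTiling lam, τ.sign * kostka (lam.colLen 0) τ.weight ν = if ν = lam then 1 else 0 := by
  induction hn : lam.colLen 0 using Nat.strong_induction_on generalizing lam ν with
  | _ n ih =>
  subst hn
  obtain rfl | hne := eq_or_ne lam ⊥
  · rw [HookTiling.sum_of_eq_bot rfl]
    simp [HookTiling.sign, colLen_bot, kostka_zero]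
  rw [HookTiling.sum_of_ne_bot hne, ← sum_neg_one_pow_isHorizontalStrip_removeHook hcard hne,
    ← Fin.sum_univ_eq_sum_range (fun i => (-1 : ℤ) ^ (lam.colLen 0 - 1 - i) *
      (if IsHorizontalStrip (removeHook lam i) ν then 1 else 0))]
  refine Finset.sum_congr rfl fun i _ => ?_
  have hsplit := card_removeHook_add_card_specialHook lam i
  calc ∑ τ, (HookTiling.cons i τ).sign * (kostka (lam.colLen 0) (HookTiling.cons i τ).weight ν : ℤ)
    _ = (-1) ^ (lam.colLen 0 - 1 - i) * ∑ κ ∈ horizontalStrips ν (specialHook lam i).card,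
          ∑ τ : HookTiling (removeHook lam i),
            τ.sign * kostka ((removeHook lam i).colLen 0) τ.weight κ := by
      rw [Finset.sum_comm, Finset.mul_sum]
      refine Finset.sum_congr rfl fun τ _ => ?_
      rw [HookTiling.kostka_weight_cons, HookTiling.sign, ← Finset.mul_sum]
      push_cast
      ring
    _ = (-1) ^ (lam.colLen 0 - 1 - i) * ∑ κ ∈ horizontalStrips ν (specialHook lam i).card,
          if κ = removeHook lam i then 1 else 0 := by
      refine congrArg _ (Finset.sum_congr rfl fun κ hκ => ?_)
      have := (mem_horizontalStrips.1 hκ).2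
      exact ih _ (colLen_removeHook_lt i.2) (by omega) rfl
    _ = _ := by
      rw [Finset.sum_ite_eq']
      simp only [mem_horizontalStrips, hsplit, hcard, and_true]

end HookTilings

/-! ### Schur coefficients -/

section SymmetricFunctions

variable {N : ℕ}

/-- The space of symmetric functions that are homogeneous of degree `N`, in the encoding by monomial
coefficients: invariance under adjacent transpositions of the variables `x_1, x_2, …`, and exponent
vectors of degree `N` not involving `x_0`. -/
def symmHomogeneous (N : ℕ) : Submodule ℚ ((ℕ → ℕ) → ℚ) where
  carrier := {f | (∀ i μ, f (μ ∘ Equiv.swap (i + 1) (i + 2)) = f μ) ∧ ∀ μ, f μ ≠ 0 →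
    μ 0 = 0 ∧ ∃ n, (∀ i, n < i → μ i = 0) ∧ ∑ i ∈ Finset.Icc 1 n, μ i = N}
  zero_mem' := ⟨fun _ _ => rfl, fun _ h => absurd rfl h⟩
  add_mem' {f g} hf hg := ⟨fun i μ => congrArg₂ (· + ·) (hf.1 i μ) (hg.1 i μ), fun μ h => by
    by_cases hfμ : f μ = 0
    · exact hg.2 μ fun hgμ => h (by simp [hfμ, hgμ])
    · exact hf.2 μ hfμ⟩
  smul_mem' a f hf := ⟨fun i μ => congrArg (a * ·) (hf.1 i μ), fun μ h =>
    hf.2 μ (right_ne_zero_of_mul h)⟩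

/-- The exponent vector of the monomial `x_1 ^ l_1 * x_2 ^ l_2 * ⋯` given by a list `l`. -/
def exponents (l : List ℕ) (i : ℕ) : ℕ := (0 :: l).getD i 0

theorem exponents_append_replicate_zero (l : List ℕ) (k : ℕ) :
    exponents (l ++ List.replicate k 0) = exponents l := by
  funext i
  simp only [exponents, ← List.cons_append, List.getD_eq_getElem?_getD, List.getElem?_append,
    List.getElem?_replicate]
  grind

theorem exponents_swap (l l' : List ℕ) (a b : ℕ) :
    exponents (l ++ a :: b :: l') =
      exponents (l ++ b :: a :: l') ∘ Equiv.swap (l.length + 1) (l.length + 2) := by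
  funext i
  simp only [exponents, Function.comp_apply, ← List.cons_append, List.getD_eq_getElem?_getD,
    Equiv.swap_apply_def]
  grind

theorem exists_exponents_eq {μ : ℕ → ℕ} {n : ℕ} (h0 : μ 0 = 0) (hn : ∀ i, n < i → μ i = 0) :
    ∃ l : List ℕ, exponents l = μ ∧ l.sum = ∑ i ∈ Finset.Icc 1 n, μ i := by
  refine ⟨(List.range' 1 n).map μ, funext fun i => ?_, ?_⟩
  · simp only [exponents, List.getD_eq_getElem?_getD]
    cases i <;> grind
  · rw [← Multiset.sum_coe, ← Multiset.map_coe]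
    rfl

theorem apply_exponents_append_of_perm {f : (ℕ → ℕ) → ℚ} (hf : f ∈ symmHomogeneous N)
    {l l' : List ℕ} (h : l.Perm l') (l₀ : List ℕ) :
    f (exponents (l₀ ++ l)) = f (exponents (l₀ ++ l')) := by
  induction h generalizing l₀ with
  | nil => rfl
  | cons a _ ih => simpa using ih (l₀ ++ [a])
  | swap a b l => rw [exponents_swap, hf.1]
  | trans _ _ ih ih' => exact (ih l₀).trans (ih' l₀)

theorem eq_zero_of_apply_exponents_eq_zero {f : (ℕ → ℕ) → ℚ} (hf : f ∈ symmHomogeneous N)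
    (h : ∀ p : Nat.Partition N, f (exponents p.parts.toList) = 0) : f = 0 := by
  funext μ
  by_contra hμ
  obtain ⟨h0, n, hn, hsum⟩ := hf.2 μ hμ
  obtain ⟨l, rfl, hl⟩ := exists_exponents_eq h0 hn
  let p := Nat.Partition.ofSums N l (hl.trans hsum)
  refine hμ (.trans ?_ (h p))
  have hperm : l.Perm (p.parts.toList ++ List.replicate (l.count 0) 0) := by
    rw [← Multiset.coe_eq_coe, ← Multiset.coe_add, Multiset.coe_toList, add_comm,
      Multiset.coe_replicate, ← Multiset.coe_count, ← Multiset.filter_eq']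
    exact (Multiset.filter_add_not _ _).symm
  exact (apply_exponents_append_of_perm hf hperm []).trans
    (congrArg f (exponents_append_replicate_zero _ _))

/-- The coefficients of a symmetric function at one monomial for each partition. -/
noncomputable def partitionCoeffs (N : ℕ) : symmHomogeneous N →ₗ[ℚ] Nat.Partition N → ℚ :=
  (LinearMap.pi fun p => LinearMap.proj (exponents p.parts.toList)) ∘ₗ (symmHomogeneous N).subtype

theorem partitionCoeffs_injective (N : ℕ) : Function.Injective (partitionCoeffs N) :=
  (injective_iff_map_eq_zero _).2 fun f hf =>
    Subtype.ext (eq_zero_of_apply_exponents_eq_zero f.2 fun p => congrFun hf p)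

instance (N : ℕ) : FiniteDimensional ℚ (symmHomogeneous N) :=
  .of_injective _ (partitionCoeffs_injective N)

theorem finrank_symmHomogeneous_le (N : ℕ) :
    Module.finrank ℚ (symmHomogeneous N) ≤ Fintype.card (Nat.Partition N) :=
  (LinearMap.finrank_le_finrank_of_injective (partitionCoeffs_injective N)).trans_eq
    (Module.finrank_fintype_fun_eq_card ℚ)

theorem schurFn_comp_swap {lam : Nat.Partition N} {μ : ℕ → ℕ} (h : schurFn lam μ ≠ 0) (i : ℕ) :
    schurFn lam (μ ∘ Equiv.swap (i + 1) (i + 2)) = schurFn lam μ := by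
  obtain ⟨h0, n, hn, -⟩ := schurFn_support h
  have hfix {j : ℕ} (hj : j = 0 ∨ i + 2 < j) : (μ ∘ Equiv.swap (i + 1) (i + 2)) j = μ j :=
    congrArg μ (Equiv.swap_apply_of_ne_of_ne (by omega) (by omega))
  have hn' (j : ℕ) (hj : max n (i + 2) < j) : μ j = 0 := hn j (by omega)
  have hswap (j : ℕ) (hj : max n (i + 2) < j) : (μ ∘ Equiv.swap (i + 1) (i + 2)) j = 0 :=
    (hfix (by omega)).trans (hn' j hj)
  rw [schurFn_eq_kostka lam h0 hn', schurFn_eq_kostka lam ((hfix (.inl rfl)).trans h0) hswap,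
    kostka_comp_swap (le_max_right _ _)]

theorem schurFn_mem_symmHomogeneous (lam : Nat.Partition N) : schurFn lam ∈ symmHomogeneous N := by
  refine ⟨fun i μ => ?_, fun μ => schurFn_support⟩
  by_cases h : schurFn lam μ = 0
  · by_contra hne
    have hinv := schurFn_comp_swap (fun h' => hne (h'.trans h.symm)) i
    rw [Function.comp_assoc, ← Equiv.coe_trans, Equiv.swap_swap, Equiv.coe_refl,
      Function.comp_id] at hinv
    exact hne hinv.symm
  · exact schurFn_comp_swap h i

/-- The signed sum over the special rim hook tilings of `lam` of the coefficients of a symmetric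
function at the weights of the tilings. -/
noncomputable def tilingSum (lam : Nat.Partition N) : ((ℕ → ℕ) → ℚ) →ₗ[ℚ] ℚ :=
  ∑ τ : HookTiling (shape lam), (τ.sign : ℚ) • LinearMap.proj τ.weight

theorem tilingSum_apply (lam : Nat.Partition N) (f : (ℕ → ℕ) → ℚ) :
    tilingSum lam f = ∑ τ : HookTiling (shape lam), (τ.sign : ℚ) * f τ.weight := by
  simp [tilingSum]

theorem tilingSum_schurFn (lam lam' : Nat.Partition N) :
    tilingSum lam (schurFn lam') = if lam' = lam then 1 else 0 := by
  have h := sum_sign_mul_kostka_weight ((card_shape lam).trans (card_shape lam').symm)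
  rw [shape_injective.eq_iff] at h
  have hcast := congrArg (Int.cast : ℤ → ℚ) h
  push_cast at hcast
  rw [tilingSum_apply, ← hcast]
  refine Finset.sum_congr rfl fun τ _ => ?_
  rw [schurFn_eq_kostka lam' rfl fun j => τ.weight_of_colLen_lt]

theorem tilingSum_sum_mul_schurFn (lam : Nat.Partition N) (c : Nat.Partition N → ℚ) :
    tilingSum lam (∑ ν, c ν • schurFn ν) = c lam := by
  simp [tilingSum_schurFn]

theorem exists_eq_sum_smul_schurFn {f : (ℕ → ℕ) → ℚ} (hf : f ∈ symmHomogeneous N) :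
    ∃ c : Nat.Partition N → ℚ, f = ∑ ν, c ν • schurFn ν := by
  let s (ν : Nat.Partition N) : symmHomogeneous N := ⟨schurFn ν, schurFn_mem_symmHomogeneous ν⟩
  have hs : LinearIndependent ℚ s := Fintype.linearIndependent_iff.2 fun c hc lam => by
    rw [← tilingSum_sum_mul_schurFn lam c, ← map_zero (tilingSum lam)]
    simpa [s] using congrArg (tilingSum lam ∘ Subtype.val) hc
  have hspan := hs.span_eq_top_of_card_eq_finrank' (hs.fintype_card_le_finrank.antisymm
    (finrank_symmHomogeneous_le N))
  obtain ⟨c, hc⟩ := (Submodule.mem_span_range_iff_exists_fun ℚ).1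
    (hspan ▸ Submodule.mem_top : (⟨f, hf⟩ : symmHomogeneous N) ∈ _)
  exact ⟨c, by simpa [s] using congrArg Subtype.val hc.symm⟩

theorem sCoeff_eq_tilingSum {f : (ℕ → ℕ) → ℚ} (hf : f ∈ symmHomogeneous N)
    (lam : Nat.Partition N) : sCoeff f lam = tilingSum lam f := by
  have h : ∃ c : Nat.Partition N →₀ ℚ, ∀ μ, f μ = c.sum fun ν a => a * schurFn ν μ := by
    obtain ⟨c, rfl⟩ := exists_eq_sum_smul_schurFn hf
    exact ⟨Finsupp.equivFunOnFinite.symm c, fun μ => by simp [Finsupp.sum_fintype]⟩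
  have hf_eq : f = ∑ ν, h.choose ν • schurFn ν := by
    funext μ
    simpa [Finsupp.sum_fintype] using h.choose_spec μ
  rw [sCoeff, dif_pos h]
  conv_rhs => rw [hf_eq, tilingSum_sum_mul_schurFn]

theorem isProperColoring_comp_iff {V : Type*} {G : SimpleGraph V} {σ : Equiv.Perm ℕ} (hσ : σ 0 = 0)
    {f : V → ℕ} : IsProperColoring G (σ ∘ f) ↔ IsProperColoring G f := by
  have hpos (k : ℕ) : 0 < σ k ↔ 0 < k := by
    rw [Nat.pos_iff_ne_zero, Nat.pos_iff_ne_zero, ← hσ, Ne, σ.injective.eq_iff, hσ]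
  simp only [IsProperColoring, Function.comp_apply, hpos, Ne, σ.injective.eq_iff]

theorem XCoeff_comp {V : Type*} [Fintype V] (G : SimpleGraph V) {σ : Equiv.Perm ℕ} (hσ : σ 0 = 0)
    (μ : ℕ → ℕ) : XCoeff G (μ ∘ σ) = XCoeff G μ := by
  refine congrArg Nat.cast (Nat.card_congr
    ((Equiv.arrowCongr (Equiv.refl V) σ).subtypeEquiv fun f => and_congr
      (isProperColoring_comp_iff hσ).symm ?_))
  refine σ.forall_congr fun i => ?_
  change _ ↔ Nat.card {v : V // σ (f v) = σ i} = μ (σ i)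
  simp only [σ.injective.eq_iff, Function.comp_apply]

theorem XCoeff_mem_symmHomogeneous {V : Type*} [Fintype V] (G : SimpleGraph V) :
    XCoeff G ∈ symmHomogeneous (Fintype.card V) := by
  refine ⟨fun i μ => XCoeff_comp G (Equiv.swap_apply_of_ne_of_ne (by omega) (by omega)) μ,
    fun μ h => ?_⟩
  rw [XCoeff, Nat.cast_ne_zero] at h
  obtain ⟨⟨f, hf, hμ⟩⟩ := (Nat.card_ne_zero.1 h).1
  simp only [Nat.card_eq_fintype_card, Fintype.card_subtype] at hμ
  refine ⟨?_, Finset.univ.sup f, fun i hi => ?_, ?_⟩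
  · rw [← hμ, Finset.card_eq_zero, Finset.filter_eq_empty_iff]
    exact fun v _ => (hf.1 v).ne'
  · rw [← hμ, Finset.card_eq_zero, Finset.filter_eq_empty_iff]
    exact fun v hv => ((Finset.le_sup hv).trans_lt hi).ne
  · simp only [← hμ]
    exact (Finset.card_eq_sum_card_fiberwise fun v hv =>
      Finset.mem_coe.2 (Finset.mem_Icc.2 ⟨hf.1 v, Finset.le_sup hv⟩)).symm

end SymmetricFunctions

/-! ### Tilings as families of rim hooks -/

section HookFamilies

variable {ν : YoungDiagram} {i k n : ℕ} {c : Cell}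

namespace HookTiling

theorem content_injOn_hook (τ : HookTiling ν) (k : ℕ) :
    Set.InjOn content (τ.hook k : Set Cell) := by
  induction τ with
  | nil h => simp [hook]
  | @cons ν i τ ih =>
    obtain rfl | hk := eq_or_ne k ((removeHook ν i).colLen 0)
    · rw [hook_cons_self]
      exact content_injOn_specialHook
    · rwa [hook_cons_of_ne τ hk]

theorem mem_iff_exists_mem_hook (τ : HookTiling ν) : c ∈ ν ↔ ∃ k, c ∈ τ.hook k := by
  induction τ with
  | nil h => simp [h, hook]
  | @cons ν i τ ih =>
    have hempty : τ.hook ((removeHook ν i).colLen 0) = ∅ := τ.hook_of_colLen_le le_rfl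
    constructor
    · intro hc
      by_cases hc' : c ∈ removeHook ν i
      · obtain ⟨k, hk⟩ := ih.1 hc'
        refine ⟨k, ?_⟩
        rwa [hook_cons_of_ne τ]
        rintro rfl
        simp [hempty] at hk
      · exact ⟨_, (hook_cons_self i τ).symm ▸ mem_specialHook.2 ⟨hc, hc'⟩⟩
    · rintro ⟨k, hk⟩
      obtain rfl | hne := eq_or_ne k ((removeHook ν i).colLen 0)
      · rw [hook_cons_self] at hk
        exact (mem_specialHook.1 hk).1
      · rw [hook_cons_of_ne τ hne] at hk
        exact removeHook_le _ _ (ih.2 ⟨k, hk⟩)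

theorem eq_of_mem_hook (τ : HookTiling ν) {k' : ℕ} (hk : c ∈ τ.hook k) (hk' : c ∈ τ.hook k') :
    k = k' := by
  induction τ with
  | nil h => exact absurd hk (Finset.notMem_empty c)
  | @cons ν i τ ih =>
    have hdisj {j : ℕ} (hj : c ∈ τ.hook j) : c ∉ specialHook ν i := fun hc =>
      (mem_specialHook.1 hc).2 (τ.mem_iff_exists_mem_hook.2 ⟨j, hj⟩)
    rw [hook, Function.update_apply] at hk hk'
    split_ifs at hk hk' with h h' h'
    · exact h.trans h'.symm
    · exact absurd hk (hdisj hk')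
    · exact absurd hk' (hdisj hk)
    · exact ih hk hk'

theorem sign_eq (τ : HookTiling ν) (hn : ν.colLen 0 ≤ n) :
    τ.sign = (-1) ^ ∑ k ∈ Finset.range n, ((Prod.fst '' (τ.hook k : Set Cell)).ncard - 1) := by
  induction τ with
  | nil h => simp [hook, sign]
  | @cons ν i τ ih =>
    have hlt := colLen_removeHook_lt i.2
    have hm := Finset.mem_range.2 (hlt.trans_le hn)
    have hrows : (Prod.fst '' (specialHook ν i : Set Cell)).ncard - 1 = ν.colLen 0 - 1 - i := by
      rw [rows_specialHook, ← Finset.coe_Ico, Set.ncard_coe_finset, Nat.card_Ico]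
      omega
    rw [sign, ih (hlt.le.trans hn), ← pow_add, ← Finset.add_sum_erase _ _ hm,
      ← Finset.add_sum_erase _ _ hm, hook_cons_self, hrows, hook_of_colLen_le τ le_rfl,
      Finset.coe_empty, Set.image_empty, Set.ncard_empty, Nat.zero_sub, zero_add]
    exact congrArg _ (congrArg _ (Finset.sum_congr rfl fun k hk => by
      rw [hook_cons_of_ne τ (Finset.ne_of_mem_erase hk)]))

theorem hook_injective : Function.Injective (hook (ν := ν)) := by
  intro τ τ' h
  induction τ with
  | nil hν =>
    cases τ' with
    | nil => rfl
    | cons i τ' => exact absurd i.2 (by simp [hν, colLen_bot])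
  | @cons ν i τ ih =>
    cases τ' with
    | nil hν => exact absurd i.2 (by simp [hν, colLen_bot])
    | cons i' τ' =>
      have hlabel : (removeHook ν i).colLen 0 = (removeHook ν i').colLen 0 := by
        refine (cons i τ).eq_of_mem_hook (c := (ν.colLen 0 - 1, 0)) ?_ ?_
        · rw [hook_cons_self]
          exact bottom_mem_specialHook i.2
        · rw [h, hook_cons_self]
          exact bottom_mem_specialHook i'.2
      have hhook : specialHook ν i = specialHook ν i' := by
        rw [← hook_cons_self i τ, h, hlabel, hook_cons_self]
      have hremove : removeHook ν i = removeHook ν i' := by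
        refine YoungDiagram.ext (Finset.coe_injective ?_)
        rw [← coe_sdiff_specialHook, ← coe_sdiff_specialHook, hhook]
      obtain rfl : i = i' := Fin.ext (removeHook_injOn i.2 i'.2 hremove)
      congr 1
      refine ih (funext fun j => ?_)
      obtain rfl | hj := eq_or_ne j ((removeHook ν i).colLen 0)
      · rw [τ.hook_of_colLen_le le_rfl, τ'.hook_of_colLen_le le_rfl]
      · rw [← hook_cons_of_ne τ hj, h, hook_cons_of_ne τ' hj]

end HookTiling

/-- The nonempty sets `H k` are the rim hooks of a tiling of `ν` by special rim hooks, removed in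
the order of the list `L` of their indices, where the index of a rim hook is the topmost row in
which it meets the first column. -/
structure IsHookFamily (ν : YoungDiagram) (L : List ℕ) (H : ℕ → Finset Cell) : Prop where
  first_mem : ∀ k, (H k).Nonempty → (k, 0) ∈ H k
  first_le : ∀ k i, (i, 0) ∈ H k → k ≤ i
  nodup : L.Nodup
  mem_iff : ∀ k, k ∈ L ↔ (H k).Nonempty
  removal : IsRemovalSeq (L.map fun k => (H k : Set Cell)) ν.cells

namespace IsHookFamily

variable {L : List ℕ} {H : ℕ → Finset Cell}

theorem exists_eq_specialHook (h : IsHookFamily ν (k :: L) H) :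
    ∃ i < ν.colLen 0, H k = specialHook ν i ∧ k = (removeHook ν i).colLen 0 := by
  have hfirst : (k, 0) ∈ H k := h.first_mem k ((h.mem_iff k).1 List.mem_cons_self)
  obtain ⟨i, hi, hspecial⟩ := _root_.exists_eq_specialHook h.removal.1 ⟨k, hfirst⟩
  replace hspecial : H k = specialHook ν i := Finset.coe_injective hspecial
  refine ⟨i, hi, hspecial, ?_⟩
  rw [hspecial, mem_specialHook_column_zero] at hfirst
  refine le_antisymm (h.first_le k _ ?_) hfirst.1
  rw [hspecial, mem_specialHook_column_zero]
  exact ⟨le_rfl, colLen_removeHook_lt hi⟩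

theorem update (h : IsHookFamily ν (k :: L) H) (hspecial : H k = specialHook ν i) :
    IsHookFamily (removeHook ν i) L (Function.update H k ∅) := by
  obtain ⟨hnotMem, hL⟩ := List.nodup_cons.1 h.nodup
  have hupdate {j : ℕ} (hj : j ≠ k) : Function.update H k ∅ j = H j :=
    Function.update_of_ne hj ..
  refine ⟨fun j hj => ?_, fun j a ha => ?_, hL, fun j => ?_, ?_⟩
  · obtain rfl | hne := eq_or_ne j k
    · simp at hj
    · rw [hupdate hne] at hj ⊢
      exact h.first_mem j hj
  · obtain rfl | hne := eq_or_ne j k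
    · simp at ha
    · rw [hupdate hne] at ha
      exact h.first_le j a ha
  · obtain rfl | hne := eq_or_ne j k
    · simpa using hnotMem
    · rw [hupdate hne, ← h.mem_iff, List.mem_cons, or_iff_right hne]
  · have hmap : (L.map fun j => (Function.update H k ∅ j : Set Cell)) =
        L.map fun j => (H j : Set Cell) :=
      List.map_congr_left fun j hj => by rw [hupdate fun hjk => hnotMem (hjk ▸ hj)]
    rw [hmap, ← coe_sdiff_specialHook, ← hspecial]
    exact h.removal.2

theorem exists_hook_eq (h : IsHookFamily ν L H) : ∃ τ : HookTiling ν, τ.hook = H := by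
  induction L generalizing ν H with
  | nil =>
    have hempty (k : ℕ) : H k = ∅ := Finset.not_nonempty_iff_eq_empty.1 fun hk => by
      simpa using (h.mem_iff k).2 hk
    exact ⟨.nil (YoungDiagram.ext (Finset.coe_eq_empty.1 h.removal)), (funext hempty).symm⟩
  | cons k L ih =>
    obtain ⟨i, hi, hspecial, hk⟩ := h.exists_eq_specialHook
    obtain ⟨τ, hτ⟩ := ih (h.update hspecial)
    refine ⟨.cons ⟨i, hi⟩ τ, ?_⟩
    rw [HookTiling.hook, hτ, ← hk, Function.update_idem, ← hspecial, Function.update_eq_self]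

end IsHookFamily

theorem HookTiling.exists_isHookFamily (τ : HookTiling ν) : ∃ L, IsHookFamily ν L τ.hook := by
  induction τ with
  | nil h =>
    subst h
    exact ⟨[], by simp [hook], by simp [hook], by simp, by simp [hook],
      by simp [IsRemovalSeq]⟩
  | @cons ν i τ ih =>
    obtain ⟨L, h⟩ := ih
    have hlt := colLen_removeHook_lt i.2
    have hnotMem : (removeHook ν i).colLen 0 ∉ L := by
      rw [h.mem_iff, τ.hook_of_colLen_le le_rfl]
      exact Finset.not_nonempty_empty
    refine ⟨(removeHook ν i).colLen 0 :: L, fun k hk => ?_, fun k j hj => ?_,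
      List.nodup_cons.2 ⟨hnotMem, h.nodup⟩, fun k => ?_, ?_⟩
    · obtain rfl | hne := eq_or_ne k ((removeHook ν i).colLen 0)
      · rw [hook_cons_self]
        exact mem_specialHook_column_zero.2 ⟨le_rfl, hlt⟩
      · rw [hook_cons_of_ne τ hne] at hk ⊢
        exact h.first_mem k hk
    · obtain rfl | hne := eq_or_ne k ((removeHook ν i).colLen 0)
      · rw [hook_cons_self] at hj
        exact (mem_specialHook_column_zero.1 hj).1
      · rw [hook_cons_of_ne τ hne] at hj
        exact h.first_le k j hj
    · obtain rfl | hne := eq_or_ne k ((removeHook ν i).colLen 0)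
      · rw [hook_cons_self]
        exact iff_of_true List.mem_cons_self ⟨_, bottom_mem_specialHook i.2⟩
      · rw [hook_cons_of_ne τ hne, List.mem_cons, or_iff_right hne, h.mem_iff]
    · have hmap : (L.map fun k => ((cons i τ).hook k : Set Cell)) =
          L.map fun k => (τ.hook k : Set Cell) :=
        List.map_congr_left fun k hk => by
          rw [hook_cons_of_ne τ fun h => hnotMem (h ▸ hk)]
      rw [List.map_cons, hmap, hook_cons_self, IsRemovalSeq, coe_sdiff_specialHook]
      exact ⟨isRimHookOf_specialHook i.2, h.removal⟩

end HookFamilies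

/-! ### Tabloids as fillings of tilings -/

section OrderedFillings

variable {α β γ : Type*} [LinearOrder α] [LinearOrder β] {s : Finset α}

theorem exists_bijOn_strictMonoOn [Nonempty γ] {t : Finset γ} {g : γ → β}
    (hg : Set.InjOn g t) (hcard : s.card = t.card) :
    ∃ p : α → γ, Set.BijOn p s t ∧ StrictMonoOn (g ∘ p) s := by
  let e : s ≃o t.image g := (s.orderIsoOfFin hcard).symm.trans
    ((t.image g).orderIsoOfFin (Finset.card_image_of_injOn hg))
  have hpre (a : s) : ∃ c ∈ t, g c = e a := Finset.mem_image.1 (e a).2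
  choose! q hqt hq using hpre
  let p : α → γ := fun a => if ha : a ∈ s then q ⟨a, ha⟩ else Classical.arbitrary γ
  have hp (a : s) : p a = q a := dif_pos a.2
  have hmono : StrictMonoOn (g ∘ p) s := fun a ha b hb hab => by
    have : e ⟨a, ha⟩ < e ⟨b, hb⟩ := e.strictMono hab
    simpa [hp ⟨a, ha⟩, hp ⟨b, hb⟩, hq] using this
  have hmaps : Set.MapsTo p s t := fun a ha => by
    simpa [hp ⟨a, ha⟩] using hqt ⟨a, ha⟩
  have hinj : Set.InjOn p s := fun a ha b hb hab => hmono.injOn ha hb (congrArg g hab)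
  exact ⟨p, ⟨hmaps, hinj, Finset.surjOn_of_injOn_of_card_le p hmaps hinj hcard.ge⟩, hmono⟩

theorem eqOn_of_strictMonoOn_of_image_eq [Preorder γ] {s : Set α} (hs : s.Finite) {f g : α → γ}
    (hf : StrictMonoOn f s) (hg : StrictMonoOn g s) (h : f '' s = g '' s) : Set.EqOn f g s := by
  have := hs.to_subtype
  rw [← Set.domRestrict_eq_domRestrict_iff]
  refine (StrictMono.range_inj hf.domRestrict hg.domRestrict).1 ?_
  rw [Set.range_domRestrict, Set.range_domRestrict, h]

end OrderedFillings

section Tabloids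

variable {V : Type*} {G : SimpleGraph V} {r : V → V → Prop} {N : ℕ}
  {lam : Nat.Partition N} {k : ℕ}

namespace SRHGTabloid

theorem ext {T T' : SRHGTabloid G r lam} (hpos : T.pos = T'.pos) (hhk : T.hk = T'.hk) :
    T = T' := by
  cases T
  cases T'
  cases hpos
  cases hhk
  rfl

theorem isProperColoring (T : SRHGTabloid G r lam) : IsProperColoring G fun v => T.hk v + 1 :=
  ⟨fun _ => Nat.succ_pos _, fun u v hadj h =>
    T.stable u v (Nat.succ_injective h) hadj.ne hadj⟩

theorem pos_mem_shape (T : SRHGTabloid G r lam) (v : V) : T.pos v ∈ shape lam :=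
  mem_shape.2 (T.pos_range ▸ ⟨v, rfl⟩)

/-- The rim hooks of a tabloid as finite sets of cells. -/
noncomputable def hooks (T : SRHGTabloid G r lam) (k : ℕ) : Finset Cell :=
  {c ∈ (shape lam).cells | ∃ v, T.hk v = k ∧ T.pos v = c}

theorem coe_hooks (T : SRHGTabloid G r lam) (k : ℕ) :
    (T.hooks k : Set Cell) = T.pos '' {v | T.hk v = k} := by
  refine Set.ext fun c => (Finset.mem_filter.trans (and_iff_right_of_imp ?_))
  rintro ⟨v, -, rfl⟩
  exact T.pos_mem_shape v

theorem pos_mem_hooks {T : SRHGTabloid G r lam} {v : V} : T.pos v ∈ T.hooks k ↔ T.hk v = k := by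
  rw [← Finset.mem_coe, coe_hooks, T.pos_inj.mem_set_image, Set.mem_ofPred_eq]

theorem exists_isHookFamily (T : SRHGTabloid G r lam) :
    ∃ L, IsHookFamily (shape lam) L T.hooks := by
  obtain ⟨L, hL, hmem, hseq⟩ := T.removal
  have hne (k : ℕ) : (T.hooks k).Nonempty ↔ ∃ v, T.hk v = k := by
    rw [← Finset.coe_nonempty, coe_hooks, Set.image_nonempty]
    rfl
  refine ⟨L, fun k hk => ?_, fun k i hi => ?_, hL, fun k => (hmem k).trans (hne k).symm, ?_⟩
  · obtain ⟨v, rfl⟩ := (hne k).1 hk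
    rw [← Finset.mem_coe, coe_hooks]
    exact T.hk_mem v
  · obtain ⟨v, rfl⟩ := (hne k).1 ⟨_, hi⟩
    rw [← Finset.mem_coe, coe_hooks] at hi
    exact T.hk_min v i hi
  · simpa only [coe_hooks, coe_cells_shape] using hseq

/-- The tiling underlying a tabloid. -/
noncomputable def tiling (T : SRHGTabloid G r lam) : HookTiling (shape lam) :=
  T.exists_isHookFamily.choose_spec.exists_hook_eq.choose

theorem hook_tiling (T : SRHGTabloid G r lam) : T.tiling.hook = T.hooks :=
  T.exists_isHookFamily.choose_spec.exists_hook_eq.choose_spec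

theorem tabSign_eq (T : SRHGTabloid G r lam) : tabSign T = T.tiling.sign := by
  have hN : (shape lam).colLen 0 ≤ N := by
    rw [YoungDiagram.colLen_eq_card]
    exact (Finset.card_filter_le _ _).trans_eq (card_shape lam)
  rw [T.tiling.sign_eq hN, tabSign]
  refine congrArg _ (Finset.sum_congr rfl fun k _ => ?_)
  rw [hook_tiling, coe_hooks, Set.image_image]
  rfl

instance [Finite V] : Finite (SRHGTabloid G r lam) := by
  let e (T : SRHGTabloid G r lam) : HookTiling (shape lam) × (V → (shape lam).cells) :=
    (T.tiling, fun v => ⟨T.pos v, T.pos_mem_shape v⟩)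
  refine Finite.of_injective e fun T T' h => ?_
  obtain ⟨htiling : T.tiling = T'.tiling, hpos⟩ := Prod.ext_iff.1 h
  replace hpos : T.pos = T'.pos := funext fun v => congrArg Subtype.val (congrFun hpos v)
  refine ext hpos (funext fun v => Eq.symm ?_)
  rw [← pos_mem_hooks, ← hpos, ← hook_tiling, ← htiling, hook_tiling, pos_mem_hooks]

theorem card_hk_eq (T : SRHGTabloid G r lam) (k : ℕ) :
    Nat.card {v // T.hk v = k} = (T.tiling.hook k).card := by
  rw [hook_tiling, ← Set.ncard_coe_finset, coe_hooks, Set.ncard_image_of_injective _ T.pos_inj]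
  rfl

theorem strictMonoOn_content_pos [LinearOrder V] (hr : ∀ u v, ¬G.Adj u v → (r u v ↔ u ≤ v))
    (T : SRHGTabloid G r lam) (k : ℕ) : StrictMonoOn (content ∘ T.pos) {v | T.hk v = k} := by
  intro u hu v hv huv
  have hstable : ¬G.Adj v u := T.stable v u (hv.trans hu.symm) huv.ne'
  refine lt_of_le_of_ne (not_lt.1 fun hlt => huv.not_ge ?_) fun heq => huv.ne (T.pos_inj ?_)
  · exact (hr v u hstable).1 (T.increasing v u (hv.trans hu.symm) hlt)
  · refine T.tiling.content_injOn_hook k ?_ ?_ heq <;>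
      rwa [hook_tiling, Finset.mem_coe, pos_mem_hooks]

theorem eq_of_tiling_eq [Finite V] [LinearOrder V] (hr : ∀ u v, ¬G.Adj u v → (r u v ↔ u ≤ v))
    {T T' : SRHGTabloid G r lam} (htiling : T.tiling = T'.tiling) (hhk : T.hk = T'.hk) :
    T = T' := by
  refine ext (funext fun v => ?_) hhk
  have hhooks : T.hooks (T.hk v) = T'.hooks (T.hk v) := by
    rw [← hook_tiling, htiling, hook_tiling]
  have hcontent : Set.EqOn (content ∘ T.pos) (content ∘ T'.pos) {u | T.hk u = T.hk v} := by
    refine eqOn_of_strictMonoOn_of_image_eq (Set.toFinite _) (T.strictMonoOn_content_pos hr _) ?_ ?_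
    · rw [hhk]
      exact T'.strictMonoOn_content_pos hr _
    · rw [Set.image_comp, Set.image_comp, ← coe_hooks, hhooks, coe_hooks, hhk]
  refine T.tiling.content_injOn_hook (T.hk v) ?_ ?_ (hcontent rfl)
  · rw [hook_tiling, Finset.mem_coe, pos_mem_hooks]
  · rw [hook_tiling, Finset.mem_coe, hhooks, pos_mem_hooks, hhk]

end SRHGTabloid

theorem HookTiling.exists_increasing_filling {ν : YoungDiagram} [Finite V] [LinearOrder V]
    (τ : HookTiling ν) {hk : V → ℕ} (hcard : ∀ k, Nat.card {v // hk v = k} = (τ.hook k).card) :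
    ∃ pos : V → Cell, ∀ k, Set.BijOn pos {v | hk v = k} (τ.hook k) ∧
      StrictMonoOn (content ∘ pos) {v | hk v = k} := by
  have := Fintype.ofFinite V
  have hcard (k : ℕ) : (Finset.univ.filter fun v => hk v = k).card = (τ.hook k).card := by
    rw [← hcard, Nat.card_eq_fintype_card, Fintype.card_subtype]
  choose p hbij hmono using fun k =>
    exists_bijOn_strictMonoOn (τ.content_injOn_hook k) (hcard k)
  simp only [Finset.coe_filter_univ] at hbij hmono
  have heq (k : ℕ) : Set.EqOn (p k) (fun v => p (hk v) v) {v | hk v = k} := by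
    rintro v rfl
    rfl
  exact ⟨fun v => p (hk v) v, fun k => ⟨(hbij k).congr (heq k),
    (hmono k).congr fun v hv => congrArg content (heq k hv)⟩⟩

namespace SRHGTabloid

theorem exists_tiling_eq [Finite V] [LinearOrder V] (hr : ∀ u v, ¬G.Adj u v → (r u v ↔ u ≤ v))
    (τ : HookTiling (shape lam)) {hk : V → ℕ} (hstable : ∀ u v, hk u = hk v → u ≠ v → ¬G.Adj u v)
    (hcard : ∀ k, Nat.card {v // hk v = k} = (τ.hook k).card) :
    ∃ T : SRHGTabloid G r lam, T.tiling = τ ∧ T.hk = hk := by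
  obtain ⟨pos, hpos⟩ := τ.exists_increasing_filling hcard
  obtain ⟨L, hL⟩ := τ.exists_isHookFamily
  have himage (k : ℕ) : pos '' {v | hk v = k} = τ.hook k := (hpos k).1.image_eq
  have hmem (v : V) : pos v ∈ τ.hook (hk v) := (hpos _).1.mapsTo rfl
  let T : SRHGTabloid G r lam :=
    { pos := pos
      hk := hk
      pos_inj := fun u v h => (hpos _).1.injOn (τ.eq_of_mem_hook (hmem u) (h ▸ hmem v)) rfl h
      pos_range := by
        ext c
        rw [← mem_shape, τ.mem_iff_exists_mem_hook]
        constructor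
        · rintro ⟨v, rfl⟩
          exact ⟨_, hmem v⟩
        · rintro ⟨k, hc⟩
          exact Set.image_subset_range _ _ ((himage k).symm.subset hc)
      hk_mem := fun v => (himage _).symm.subset (hL.first_mem _ ⟨_, hmem v⟩)
      hk_min := fun v i hi => hL.first_le _ i ((himage _).subset hi)
      removal := by
        refine ⟨L, hL.nodup, fun k => ?_, ?_⟩
        · rw [hL.mem_iff, ← Finset.coe_nonempty, ← himage, Set.image_nonempty]
          rfl
        · simpa only [himage, coe_cells_shape] using hL.removal
      stable := hstable
      increasing := fun u v huv hlt => by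
        have hle : u ≤ v := ((hpos _).2.lt_iff_lt huv rfl).1 hlt |>.le
        obtain rfl | hne := eq_or_ne u v
        · exact absurd hlt (lt_irrefl _)
        · exact (hr u v (hstable u v huv hne)).2 hle }
  refine ⟨T, HookTiling.hook_injective (funext fun k => Finset.coe_injective ?_), rfl⟩
  rw [hook_tiling, coe_hooks]
  exact himage k

end SRHGTabloid

end Tabloids

section Counting

variable {V : Type*} {G : SimpleGraph V} {r : V → V → Prop} {N : ℕ} {lam : Nat.Partition N}

theorem XCoeff_weight_eq_card [Fintype V] [LinearOrder V]
    (hr : ∀ u v, ¬G.Adj u v → (r u v ↔ u ≤ v)) (τ : HookTiling (shape lam)) :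
    XCoeff G τ.weight = Nat.card {T : SRHGTabloid G r lam // T.tiling = τ} := by
  have hweight (T : SRHGTabloid G r lam) (hT : T.tiling = τ) (k : ℕ) :
      Nat.card {v // T.hk v + 1 = k} = τ.weight k := by
    subst hT
    cases k with
    | zero => simp [HookTiling.weight]
    | succ k => simpa [HookTiling.weight] using T.card_hk_eq k
  let coloring (T : {T : SRHGTabloid G r lam // T.tiling = τ}) : {f : V → ℕ //
      IsProperColoring G f ∧ ∀ k, Nat.card {v : V // f v = k} = τ.weight k} :=
    ⟨fun v => T.1.hk v + 1, T.1.isProperColoring, hweight T T.2⟩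
  refine congrArg Nat.cast (Nat.card_eq_of_bijective coloring ⟨?_, ?_⟩).symm
  · rintro ⟨T, hT⟩ ⟨T', hT'⟩ h
    have hhk : T.hk = T'.hk := funext fun v =>
      Nat.succ_injective (congrFun (congrArg Subtype.val h) v)
    exact Subtype.ext (SRHGTabloid.eq_of_tiling_eq hr (hT.trans hT'.symm) hhk)
  · rintro ⟨f, ⟨hpos, hadj⟩, hf⟩
    obtain ⟨g, rfl⟩ : ∃ g : V → ℕ, f = fun v => g v + 1 :=
      ⟨fun v => f v - 1, funext fun v => (Nat.sub_add_cancel (hpos v)).symm⟩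
    obtain ⟨T, hT, rfl⟩ := SRHGTabloid.exists_tiling_eq hr τ
      (fun u v huv _ h => hadj u v h (congrArg (· + 1) huv))
      fun k => by simpa [HookTiling.weight] using hf (k + 1)
    exact ⟨⟨T, hT⟩, rfl⟩

theorem sum_tabSign_eq_tilingSum [Fintype V] [LinearOrder V]
    (hr : ∀ u v, ¬G.Adj u v → (r u v ↔ u ≤ v)) [Fintype (SRHGTabloid G r lam)] :
    ∑ T : SRHGTabloid G r lam, (tabSign T : ℚ) = tilingSum lam (XCoeff G) := by
  simp only [SRHGTabloid.tabSign_eq]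
  rw [tilingSum_apply, ← Finset.sum_fiberwise Finset.univ SRHGTabloid.tiling]
  refine Finset.sum_congr rfl fun τ _ => ?_
  rw [XCoeff_weight_eq_card hr, Nat.card_eq_fintype_card, Fintype.card_subtype,
    Finset.sum_congr rfl fun T hT => by rw [(Finset.mem_filter.1 hT).2],
    Finset.sum_const, nsmul_eq_mul, mul_comm]

theorem card_eq_one_sub_card_eq_neg_one {α : Type*} [Fintype α] {f : α → ℤ}
    (hf : ∀ a, f a = 1 ∨ f a = -1) :
    (Nat.card {a // f a = 1} : ℚ) - Nat.card {a // f a = -1} = ∑ a, (f a : ℚ) := by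
  have hval (a : α) : (f a : ℚ) = (if f a = 1 then 1 else 0) - if f a = -1 then 1 else 0 := by
    obtain h | h := hf a <;> simp [h]
  simp [Finset.sum_congr rfl fun a _ => hval a, Finset.sum_sub_distrib, Fintype.card_subtype]

theorem tabSign_eq_one_or (T : SRHGTabloid G r lam) : tabSign T = 1 ∨ tabSign T = -1 :=
  neg_one_pow_eq_or ℤ _

theorem exists_linearOrder_le_iff (po : PartialOrder V)
    (hcomp : ∀ u v : V, ¬G.Adj u v → po.le u v ∨ po.le v u) :
    ∃ lo : LinearOrder V, ∀ u v, ¬G.Adj u v → (po.le u v ↔ lo.le u v) := by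
  have hle (u v : V) (h : po.le u v) : toLinearExtension u ≤ toLinearExtension v :=
    toLinearExtension.monotone h
  refine ⟨(inferInstance : LinearOrder (LinearExtension V)), fun u v huv =>
    ⟨hle u v, fun h => (hcomp u v huv).elim id fun h' => ?_⟩⟩
  obtain rfl : u = v := le_antisymm (α := LinearExtension V) h (hle v u h')
  exact le_rfl

end Counting

/-- For a finite simple graph `G`, a partition `lam` of `|V(G)|`,
and a partial order on `V(G)` in which any two nonadjacent vertices are comparable,
the coefficient of the Schur function `s_lam` in the chromatic symmetric function
`X_G` is the sum of the signs of all special rim hook `G`-tabloids of shape `lam`: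
`[s_lam] X_G = ∑_{T ∈ 𝒯_{lam,G}} sgn T`. -/
theorem schurCoeff_eq_sum_tabSign
    {V : Type*} [Fintype V] (G : SimpleGraph V) (po : PartialOrder V)
    (hcomp : ∀ u v : V, ¬G.Adj u v → po.le u v ∨ po.le v u)
    (lam : Nat.Partition (Fintype.card V)) :
    sCoeff (XCoeff G) lam =
      (Nat.card {T : SRHGTabloid G po.le lam // tabSign T = 1} : ℚ) -
      (Nat.card {T : SRHGTabloid G po.le lam // tabSign T = -1} : ℚ) := by
  obtain ⟨lo, hr⟩ := exists_linearOrder_le_iff po hcomp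
  have := Fintype.ofFinite (SRHGTabloid G po.le lam)
  rw [sCoeff_eq_tilingSum (XCoeff_mem_symmHomogeneous G), ← sum_tabSign_eq_tilingSum hr,
    card_eq_one_sub_card_eq_neg_one tabSign_eq_one_or]
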